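/- arXiv:1301.6645 — 3 statements merged into one kernel-verified Lean document; each statement's English description precedes it below -/
import Mathlib

section
/- The automorphism φ of F₃ determined by a ↦ w_a, b ↦ w_b, c ↦ w_c is fully irreducible: for every integer n ≥ 1, every subgroup A of F₃ that is a proper nontrivial free factor (A ≠ ⊥ and A ≠ F₃), and every element u ∈ F₃, the image subgroup of A under φⁿ is not equal to the conjugate subgroup u·A·u⁻¹. (This is the group-theoretically expressible content of the Main Theorem in rank 3: the constructed outer automorphism is fully irreducible.) -/
noncomputable section

/-- The free group of rank 3. -/
abbrev F3 := FreeGroup (Fin 3)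

/-- The generator `a`. -/
def a : F3 := FreeGroup.of 0
/-- The generator `b`. -/
def b : F3 := FreeGroup.of 1
/-- The generator `c`. -/
def c : F3 := FreeGroup.of 2

/-- The word `w_a`. -/
def wa : F3 :=
  a*b*a*b⁻¹*a*a*c*b⁻¹*a*b*a*b⁻¹*a*a*c*b*a*b*a*b⁻¹*a*a*c*a*b*a*b⁻¹*a*a*c*b⁻¹*a

/-- The word `w_b`. -/
def wb : F3 :=
  b*a*b*a*b⁻¹*a*a*c*a⁻¹*b*c⁻¹*a⁻¹*a⁻¹*b*a⁻¹*b⁻¹*a⁻¹*c⁻¹*a⁻¹*a⁻¹*b*a⁻¹*b⁻¹*a⁻¹*b⁻¹*c⁻¹*a⁻¹*a⁻¹*b*a⁻¹*b⁻¹*a⁻¹*b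

/-- The word `w_c`. -/
def wc : F3 := a*b*a*b⁻¹*a*a*c

/-- `A` is a free factor of `G` if there is a subgroup `B` such that the canonical
homomorphism `A ∗ B →* G` induced by the inclusions is bijective. -/
def IsFreeFactor {G : Type*} [Group G] (A : Subgroup G) : Prop :=
  ∃ B : Subgroup G, Function.Bijective (Monoid.Coprod.lift A.subtype B.subtype)

/-!
A homomorphism `G → K` is constant on conjugacy classes, so if `φⁿ(A) = uAu⁻¹` then the subspace of
`H¹(G; K) = Hom(G, K)` of classes vanishing on `A` is stable under the pullback `(φ*)ⁿ`.
Homomorphisms on the two factors of `G = A ∗ B` extend to `G`, and `A`, `B` are free when `G` is,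
so for a proper nontrivial free factor this subspace is neither `0` nor everything.

For the given `φ`, the map `φ*` on `H¹(F₃; ℚ) ≃ ℚ³` has the irreducible characteristic polynomial
`X³ - 20X² + 28X - 1`, so its only invariant subspaces are `0` and `ℚ³`. The same holds for its
powers: `ℚ[φ*]` is a field of prime degree `3` over `ℚ`, so it is generated by any non-scalar power
of `φ*`, and no power is scalar because of a sign pattern that multiplication by the matrix of `φ*`
preserves.
-/

open Module Polynomial

section InvariantSubspaces

section CommRing

variable {R V : Type*} [CommRing R] [AddCommGroup V] [Module R V] {f g : End R V}
  {W : Submodule R V}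

lemma aeval_restrict_apply (hW : W ∈ f.invtSubmodule) (q : R[X]) (w : W) :
    (aeval (f.restrict hW) q w : V) = aeval f q w := by
  simp [aeval_endomorphism, Polynomial.sum, Module.End.pow_restrict _ hW]

lemma mem_invtSubmodule_of_mem_adjoin_singleton (hf : f ∈ Algebra.adjoin R {g})
    (hW : W ∈ g.invtSubmodule) : W ∈ f.invtSubmodule := by
  rw [Algebra.adjoin_singleton_eq_range_aeval] at hf
  obtain ⟨q, rfl⟩ := hf
  exact fun w hw ↦ aeval_apply_smul_mem_of_le_comap hw q g hW

end CommRing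

variable {K V : Type*} [Field K] [AddCommGroup V] [Module K V] {f g : End K V}
  {W : Submodule K V}

lemma minpoly_restrict_dvd (hW : W ∈ f.invtSubmodule) :
    minpoly K (f.restrict hW) ∣ minpoly K f := by
  refine minpoly.dvd K _ (LinearMap.ext fun w ↦ Subtype.ext ?_)
  rw [aeval_restrict_apply, minpoly.aeval]
  rfl

variable [FiniteDimensional K V]

lemma eq_bot_or_eq_top_of_irreducible_charpoly (hf : Irreducible f.charpoly)
    (hW : W ∈ f.invtSubmodule) : W = ⊥ ∨ W = ⊤ := by
  refine or_iff_not_imp_left.2 fun hbot ↦ Submodule.eq_top_of_finrank_eq ?_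
  have : Nontrivial W := Submodule.nontrivial_iff_ne_bot.2 hbot
  have hdvd : minpoly K (f.restrict hW) ∣ f.charpoly :=
    (minpoly_restrict_dvd hW).trans f.minpoly_dvd_charpoly
  have hassoc : Associated f.charpoly (minpoly K (f.restrict hW)) :=
    (hf.dvd_iff.1 hdvd).resolve_left (minpoly.not_isUnit K _)
  refine (Submodule.finrank_le W).antisymm ?_
  rw [← f.charpoly_natDegree, ← (f.restrict hW).charpoly_natDegree]
  exact natDegree_le_of_dvd (hassoc.dvd.trans (LinearMap.minpoly_dvd_charpoly _))
    (LinearMap.charpoly_monic _).ne_zero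

/-- `K[f]` is the image of the field `K[X] ⧸ (χ_f)`, whose degree over `K` is prime, so that it has
no proper intermediate fields. -/
lemma mem_adjoin_of_irreducible_charpoly_of_prime_finrank (hf : Irreducible f.charpoly)
    (hV : (finrank K V).Prime) (hg : g ∈ Algebra.adjoin K {f})
    (hg_bot : g ∉ (⊥ : Subalgebra K (End K V))) : f ∈ Algebra.adjoin K {g} := by
  have : Fact (Irreducible f.charpoly) := ⟨hf⟩
  have hprime : (finrank K (AdjoinRoot f.charpoly)).Prime := by
    rwa [(AdjoinRoot.powerBasis hf.ne_zero).finrank, AdjoinRoot.powerBasis_dim,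
      f.charpoly_natDegree]
  let π : AdjoinRoot f.charpoly →ₐ[K] End K V :=
    Ideal.Quotient.liftₐ (Ideal.span {f.charpoly}) (aeval f) fun q hq ↦ by
      obtain ⟨r, rfl⟩ := Ideal.mem_span_singleton.1 hq
      rw [map_mul, f.aeval_self_charpoly, zero_mul]
  have hπ (q : K[X]) : π (AdjoinRoot.mk _ q) = aeval f q := rfl
  rw [Algebra.adjoin_singleton_eq_range_aeval] at hg
  obtain ⟨q, rfl⟩ := hg
  have := Subalgebra.isSimpleOrder_of_finrank_prime K _ hprime
  obtain hbot | htop := eq_bot_or_eq_top (Algebra.adjoin K {AdjoinRoot.mk f.charpoly q})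
  · refine absurd ?_ hg_bot
    rw [← Algebra.map_bot π, ← hbot, AlgHom.map_adjoin_singleton]
    exact Algebra.self_mem_adjoin_singleton K _
  · have hroot : π (AdjoinRoot.root _) ∈ (Algebra.adjoin K {AdjoinRoot.mk f.charpoly q}).map π :=
      Subalgebra.mem_map.2 ⟨_, htop ▸ Algebra.mem_top, rfl⟩
    rwa [AlgHom.map_adjoin_singleton, hπ, ← AdjoinRoot.mk_X, hπ, aeval_X] at hroot

end InvariantSubspaces

section FreeFactors

lemma exists_monoidHom_ne_one (G H : Type*) [Group G] [IsFreeGroup G] [Nontrivial G] [Group H]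
    [Nontrivial H] : ∃ f : G →* H, f ≠ 1 := by
  obtain ⟨y, hy⟩ := exists_ne (1 : H)
  by_contra! h
  have : IsEmpty (IsFreeGroup.Generators G) := ⟨fun i ↦ hy <| by
    simpa using DFunLike.congr_fun (h (IsFreeGroup.lift fun _ ↦ y)) (IsFreeGroup.of i)⟩
  exact not_subsingleton G (IsFreeGroup.toFreeGroup G).toEquiv.subsingleton

variable {G : Type*} [Group G] {A B : Subgroup G}

lemma exists_domRestrict_eq_of_bijective_coprodLift
    (hAB : Function.Bijective (Monoid.Coprod.lift A.subtype B.subtype)) {H : Type*} [Group H]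
    (f : A →* H) (g : B →* H) : ∃ h : G →* H, h.domRestrict A = f ∧ h.domRestrict B = g := by
  let e : Monoid.Coprod A B ≃* G := MulEquiv.ofBijective _ hAB
  have hinl (x : A) : e.symm x = Monoid.Coprod.inl x := e.symm_apply_eq.2 (by simp [e])
  have hinr (x : B) : e.symm x = Monoid.Coprod.inr x := e.symm_apply_eq.2 (by simp [e])
  refine ⟨(Monoid.Coprod.lift f g).comp e.symm.toMonoidHom, ?_, ?_⟩ <;> ext x <;>
    simp [hinl, hinr]

namespace IsFreeFactor

variable [IsFreeGroup G] (H : Type*) [Group H] [Nontrivial H]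

lemma exists_monoidHom_not_le_ker (hA : IsFreeFactor A) (hbot : A ≠ ⊥) :
    ∃ h : G →* H, ¬ A ≤ h.ker := by
  obtain ⟨B, hAB⟩ := hA
  have := (Subgroup.nontrivial_iff_ne_bot A).2 hbot
  obtain ⟨f, hf⟩ := exists_monoidHom_ne_one A H
  obtain ⟨h, rfl, -⟩ := exists_domRestrict_eq_of_bijective_coprodLift hAB f 1
  exact ⟨h, fun hle ↦ hf (MonoidHom.ext fun x ↦ hle x.2)⟩

lemma exists_monoidHom_ne_one_le_ker (hA : IsFreeFactor A) (htop : A ≠ ⊤) :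
    ∃ h : G →* H, h ≠ 1 ∧ A ≤ h.ker := by
  obtain ⟨B, hAB⟩ := hA
  have hB : B ≠ ⊥ := by
    rintro rfl
    have hrange := MonoidHom.range_eq_top.2 hAB.2
    rw [Monoid.Coprod.range_lift, A.range_subtype, Subgroup.range_subtype, sup_bot_eq] at hrange
    exact htop hrange
  have := (Subgroup.nontrivial_iff_ne_bot B).2 hB
  obtain ⟨g, hg⟩ := exists_monoidHom_ne_one B H
  obtain ⟨h, hhA, rfl⟩ := exists_domRestrict_eq_of_bijective_coprodLift hAB 1 g
  refine ⟨h, ?_, fun x hx ↦ DFunLike.congr_fun hhA (⟨x, hx⟩ : A)⟩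
  rintro rfl
  exact hg rfl

end IsFreeFactor

end FreeFactors

/-- The first cohomology `H¹(G; R)` with trivial coefficients, encoded as the `R`-module of
additive homomorphisms from `Additive G` to `R`. -/
abbrev FirstCohomology (R G : Type*) [CommRing R] [Group G] : Type _ := Additive G →+ R

namespace FirstCohomology

variable {R G : Type*} [CommRing R] [Group G]

variable (R) in
/-- The map induced on `H¹(G; R)` by an endomorphism of `G`. It is contravariant in `φ`. -/
def pullback (φ : G →* G) : End R (FirstCohomology R G) where
  toFun h := h.comp φ.toAdditive
  map_add' _ _ := rfl
  map_smul' _ _ := rfl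

lemma pullback_apply (φ : G →* G) (h : FirstCohomology R G) (x : G) :
    pullback R φ h (.ofMul x) = h (.ofMul (φ x)) := rfl

lemma pullback_pow (φ : MulAut G) (n : ℕ) :
    pullback R (φ ^ n : MulAut G).toMonoidHom = pullback R φ.toMonoidHom ^ n := by
  induction n with
  | zero => rfl
  | succ n ih => rw [pow_succ (pullback _ _), ← ih, pow_succ']; rfl

variable (R) in
/-- The submodule of classes in `H¹(G; R)` that restrict to zero on the subgroup `A`. -/
def annihilator (A : Subgroup G) : Submodule R (FirstCohomology R G) where
  carrier := {h | ∀ x ∈ A, h (.ofMul x) = 0}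
  add_mem' hf hg x hx := by simp [hf x hx, hg x hx]
  zero_mem' _ _ := rfl
  smul_mem' r h hh x hx := by simp [hh x hx]

lemma annihilator_mem_invtSubmodule {φ : G →* G} {A : Subgroup G} {u : G}
    (hA : A.map φ ≤ A.map (MulAut.conj u).toMonoidHom) :
    annihilator R A ∈ (pullback R φ).invtSubmodule := by
  intro h hh x hx
  obtain ⟨y, hy, hyx⟩ := hA (Subgroup.mem_map_of_mem φ hx)
  rw [pullback_apply, ← hyx]
  simp [hh y hy]

section FreeFactors

variable [Nontrivial R] [IsFreeGroup G] {A : Subgroup G}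

lemma annihilator_ne_top (hA : IsFreeFactor A) (hbot : A ≠ ⊥) : annihilator R A ≠ ⊤ := by
  obtain ⟨h, hh⟩ := hA.exists_monoidHom_not_le_ker (Multiplicative R) hbot
  intro htop
  have hmem : h.toAdditiveLeft ∈ annihilator R A := htop ▸ Submodule.mem_top
  exact hh hmem

lemma annihilator_ne_bot (hA : IsFreeFactor A) (htop : A ≠ ⊤) : annihilator R A ≠ ⊥ := by
  obtain ⟨h, hne, hle⟩ := hA.exists_monoidHom_ne_one_le_ker (Multiplicative R) htop
  refine (Submodule.ne_bot_iff _).2 ⟨h.toAdditiveLeft, hle, fun hzero ↦ hne ?_⟩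
  exact MonoidHom.toAdditiveLeft.injective hzero

end FreeFactors

variable (R) (ι : Type*)

/-- The identification of `H¹(FreeGroup ι; R)` with `ι → R` by evaluation at the generators. -/
def freeGroupEquiv : FirstCohomology R (FreeGroup ι) ≃ₗ[R] (ι → R) where
  toFun h i := h (.ofMul (.of i))
  invFun v := (FreeGroup.lift fun i ↦ Multiplicative.ofAdd (v i)).toAdditiveLeft
  map_add' _ _ := rfl
  map_smul' _ _ := rfl
  left_inv h := MonoidHom.toAdditiveLeft.symm.injective <| by
    apply FreeGroup.ext_hom
    intro i
    simp
  right_inv v := by ext i; simp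

instance [Finite ι] : Module.Finite R (FirstCohomology R (FreeGroup ι)) :=
  .equiv (freeGroupEquiv R ι).symm

/-- The basis of `H¹(FreeGroup ι; R)` dual to the generators. -/
def freeGroupBasis [Finite ι] : Basis ι R (FirstCohomology R (FreeGroup ι)) :=
  .ofEquivFun (freeGroupEquiv R ι)

variable {R ι}

lemma freeGroupBasis_apply_of [Finite ι] [DecidableEq ι] (i j : ι) :
    freeGroupBasis R ι j (.ofMul (.of i)) = if i = j then 1 else 0 := by
  simp [freeGroupBasis, freeGroupEquiv, Pi.single_apply]

lemma toMatrix_pullback_apply [Fintype ι] [DecidableEq ι] (φ : FreeGroup ι →* FreeGroup ι)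
    (i j : ι) :
    LinearMap.toMatrix (freeGroupBasis R ι) (freeGroupBasis R ι) (pullback R φ) i j =
      freeGroupBasis R ι j (.ofMul (φ (.of i))) := by
  simp [LinearMap.toMatrix_apply, freeGroupBasis, freeGroupEquiv, pullback_apply]

end FirstCohomology

open FirstCohomology

/-- An automorphism is fully irreducible if none of its positive powers maps a proper nontrivial
free factor onto a conjugate of itself. -/
def IsFullyIrreducible {G : Type*} [Group G] (φ : MulAut G) : Prop :=
  ∀ n : ℕ, 1 ≤ n → ∀ A : Subgroup G, IsFreeFactor A → A ≠ ⊥ → A ≠ ⊤ → ∀ u : G,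
    A.map (φ ^ n : MulAut G).toMonoidHom ≠ A.map (MulAut.conj u).toMonoidHom

theorem isFullyIrreducible_of_irreducible_charpoly_of_prime_finrank {K G : Type*} [Field K]
    [Group G] [IsFreeGroup G] [FiniteDimensional K (FirstCohomology K G)] {φ : MulAut G}
    (hirr : Irreducible (pullback K φ.toMonoidHom).charpoly)
    (hprime : (finrank K (FirstCohomology K G)).Prime)
    (hscalar : ∀ n : ℕ, 1 ≤ n → pullback K φ.toMonoidHom ^ n ∉ (⊥ : Subalgebra K (End K _))) :
    IsFullyIrreducible φ := by
  intro n hn A hA hbot htop u h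
  have hinv_pow : annihilator K A ∈ (pullback K φ.toMonoidHom ^ n).invtSubmodule :=
    pullback_pow (R := K) φ n ▸ annihilator_mem_invtSubmodule h.le
  have hadjoin : pullback K φ.toMonoidHom ∈ Algebra.adjoin K {pullback K φ.toMonoidHom ^ n} :=
    mem_adjoin_of_irreducible_charpoly_of_prime_finrank hirr hprime
      (pow_mem (Algebra.self_mem_adjoin_singleton K _) n) (hscalar n hn)
  have hinv : annihilator K A ∈ (pullback K φ.toMonoidHom).invtSubmodule :=
    mem_invtSubmodule_of_mem_adjoin_singleton hadjoin hinv_pow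
  obtain hann | hann := eq_bot_or_eq_top_of_irreducible_charpoly hirr hinv
  · exact annihilator_ne_bot hA htop hann
  · exact annihilator_ne_top hA hbot hann

section RankThree

section Words

variable {R : Type*} [CommRing R] (h : FirstCohomology R F3)

lemma apply_wa : h (.ofMul wa) = 17 * h (.ofMul a) - h (.ofMul b) + 4 * h (.ofMul c) := by
  simp only [wa, ofMul_mul, ofMul_inv, map_add, map_neg]
  ring

lemma apply_wb : h (.ofMul wb) = -9 * h (.ofMul a) + 2 * h (.ofMul b) - 2 * h (.ofMul c) := by
  simp only [wb, ofMul_mul, ofMul_inv, map_add, map_neg]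
  ring

lemma apply_wc : h (.ofMul wc) = 4 * h (.ofMul a) + h (.ofMul c) := by
  simp only [wc, ofMul_mul, ofMul_inv, map_add, map_neg]
  ring

end Words

/-- The matrix whose rows are the exponent sums of `a`, `b`, `c` in `w_a`, `w_b`, `w_c`. -/
def exponentSumMatrix : Matrix (Fin 3) (Fin 3) ℤ := !![17, -1, 4; -9, 2, -2; 4, 0, 1]

lemma toMatrix_pullback_eq_exponentSumMatrix {R : Type*} [CommRing R] {φ : F3 →* F3}
    (ha : φ a = wa) (hb : φ b = wb) (hc : φ c = wc) :
    LinearMap.toMatrix (freeGroupBasis R (Fin 3)) (freeGroupBasis R (Fin 3)) (pullback R φ) =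
      exponentSumMatrix.map (Int.castRingHom R) := by
  ext i j
  rw [toMatrix_pullback_apply]
  fin_cases i
  · change freeGroupBasis R (Fin 3) j (.ofMul (φ a)) = _
    rw [ha, apply_wa, a, b, c]
    simp only [freeGroupBasis_apply_of]
    fin_cases j <;> simp [exponentSumMatrix]
  · change freeGroupBasis R (Fin 3) j (.ofMul (φ b)) = _
    rw [hb, apply_wb, a, b, c]
    simp only [freeGroupBasis_apply_of]
    fin_cases j <;> simp [exponentSumMatrix]
  · change freeGroupBasis R (Fin 3) j (.ofMul (φ c)) = _
    rw [hc, apply_wc, a, c]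
    simp only [freeGroupBasis_apply_of]
    fin_cases j <;> simp [exponentSumMatrix]

lemma charpoly_exponentSumMatrix :
    exponentSumMatrix.charpoly = X ^ 3 - 20 * X ^ 2 + 28 * X - 1 := by
  have hcharmatrix : exponentSumMatrix.charmatrix =
      !![X - 17, 1, -4; 9, X - 2, 2; -4, 0, X - 1] := by
    ext1 i j
    fin_cases i <;> fin_cases j <;> simp [exponentSumMatrix]
  rw [Matrix.charpoly, hcharmatrix, Matrix.det_fin_three]
  simp only [Matrix.of_apply, Matrix.cons_val]
  ring

lemma irreducible_charpoly_exponentSumMatrix : Irreducible exponentSumMatrix.charpoly := by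
  have hdeg : exponentSumMatrix.charpoly.natDegree = 3 := Matrix.charpoly_natDegree_eq_dim _
  rw [exponentSumMatrix.charpoly_monic.irreducible_iff_roots_eq_zero_of_degree_le_three
    (by lia) hdeg.le, Multiset.eq_zero_iff_forall_notMem]
  intro r hr
  have hroot : r ^ 3 - 20 * r ^ 2 + 28 * r - 1 = 0 := by
    simpa [charpoly_exponentSumMatrix] using isRoot_of_mem_roots hr
  have hunit : IsUnit r := .of_mul_eq_one (r ^ 2 - 20 * r + 28) (by linear_combination hroot)
  obtain rfl | rfl := Int.isUnit_iff.1 hunit <;> norm_num at hroot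

lemma mul_exponentSumMatrix_row (N : Matrix (Fin 3) (Fin 3) ℤ) (i : Fin 3) :
    (N * exponentSumMatrix) i =
      ![17 * N i 0 - 9 * N i 1 + 4 * N i 2, -N i 0 + 2 * N i 1, 4 * N i 0 - 2 * N i 1 + N i 2] := by
  ext j
  fin_cases j <;> simp [Matrix.mul_apply, Fin.sum_univ_three, exponentSumMatrix] <;> ring

/-- Conjugating by `diag(1, -1, 1)` makes the matrix entrywise nonnegative, whence the signs. -/
lemma exponentSumMatrix_pow_row_zero_signs {n : ℕ} (hn : 1 ≤ n) :
    0 < (exponentSumMatrix ^ n) 0 0 ∧ (exponentSumMatrix ^ n) 0 1 < 0 ∧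
      0 < (exponentSumMatrix ^ n) 0 2 := by
  induction n, hn using Nat.le_induction with
  | base => simp [exponentSumMatrix]
  | succ n _ ih =>
    rw [pow_succ]
    simp only [mul_exponentSumMatrix_row, Matrix.cons_val]
    lia

lemma pow_exponentSumMatrix_map_notMem_bot {R : Type*} [CommRing R] [CharZero R] {n : ℕ}
    (hn : 1 ≤ n) :
    exponentSumMatrix.map (Int.castRingHom R) ^ n ∉ (⊥ : Subalgebra R (Matrix _ _ R)) := by
  rintro ⟨r, hr⟩
  rw [← Matrix.map_pow] at hr
  have hentry : (((exponentSumMatrix ^ n) 0 1 : ℤ) : R) = 0 := by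
    simpa [Matrix.algebraMap_matrix_apply] using (congrFun₂ hr 0 1).symm
  exact (exponentSumMatrix_pow_row_zero_signs hn).2.1.ne (Int.cast_eq_zero.1 hentry)

end RankThree

/-- The automorphism `φ` of `F₃` with `a ↦ w_a`, `b ↦ w_b`, `c ↦ w_c` is fully
irreducible: no positive power maps a proper nontrivial free factor onto a conjugate
of itself. -/
theorem fully_irreducible_rank3 (φ : MulAut F3)
    (ha : φ a = wa) (hb : φ b = wb) (hc : φ c = wc) :
    ∀ n : ℕ, 1 ≤ n → ∀ A : Subgroup F3, IsFreeFactor A → A ≠ ⊥ → A ≠ ⊤ →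
      ∀ u : F3,
        Subgroup.map (φ ^ n : MulAut F3).toMonoidHom A ≠
          Subgroup.map (MulAut.conj u).toMonoidHom A := by
  have hM := toMatrix_pullback_eq_exponentSumMatrix (R := ℚ) (φ := φ.toMonoidHom) ha hb hc
  refine isFullyIrreducible_of_irreducible_charpoly_of_prime_finrank (K := ℚ) ?_ ?_ ?_
  · rw [← LinearMap.charpoly_toMatrix _ (freeGroupBasis ℚ (Fin 3)), hM, Matrix.charpoly_map]
    exact exponentSumMatrix.charpoly_monic.irreducible_iff_irreducible_map_fraction_map.1
      irreducible_charpoly_exponentSumMatrix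
  · rw [(freeGroupEquiv ℚ (Fin 3)).finrank_eq, finrank_fin_fun]
    exact Nat.prime_three
  · rintro n hn ⟨r, hr⟩
    refine pow_exponentSumMatrix_map_notMem_bot hn ⟨r, ?_⟩
    have hmat := congrArg (LinearMap.toMatrixAlgEquiv (freeGroupBasis ℚ (Fin 3))) hr
    rw [map_pow] at hmat
    rw [← hM]
    exact (AlgEquiv.commutes _ r).symm.trans hmat
end
end

section
/- For every integer r ≥ 3 there exists a group automorphism φ of the free group F_r of rank r such that for every integer n ≥ 1: (i) for every subgroup A of F_r that is a proper nontrivial free factor (A ≠ ⊥ and A ≠ F_r) and every u ∈ F_r, the image of A under φⁿ is not equal to u·A·u⁻¹ (φ is fully irreducible); and (ii) for every nontrivial element w ∈ F_r, φⁿ(w) is not conjugate to w (φ is atoroidal). (This is the group-theoretically expressible content of the Main Theorem: in each rank r ≥ 3 there exists an ageometric fully irreducible outer automorphism; ageometric fully irreducibles are nongeometric, hence atoroidal.) -/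
noncomputable section

/-!
Let `r = m + 1` and let `φ` send `aₖ` to `aₖ₊₁ a₀` for `k < m` and `aₘ` to `a₀`. On exponent sums
`φ` acts by the companion matrix `T` of `xᵐ⁺¹ = xᵐ + ⋯ + x + 1`. It has a simple expanding
eigenvalue and is bounded on the complementary invariant hyperplane, which contains no nonzero
integer vector because `T` has no nonzero periodic vector.

A proper free factor `A` has all its exponent sums in a rational hyperplane, and not all of them
are zero. If `φⁿ(A)` is conjugate to `A`, the `Tⁿ`-orbit of a nonzero exponent sum of `A` stays in
that hyperplane, and so does its limiting direction, the expanding eigenvector. But the entries of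
this eigenvector are linearly independent over `ℚ`.

If `φⁿ(w)` is conjugate to `w ≠ 1`, the exponent sum of `w` is a periodic vector of `T`, hence
zero. Write a conjugate of `w` as a product of as few blocks `p q⁻¹` as possible, with `p` and `q`
positive words. As `φ(p)` and `φ(q)` are positive words ending in `a₀`, which cancels in
`φ(p) φ(q)⁻¹`, the least number of blocks cannot increase under `φ`; by periodicity it is constant
along the orbit. Then every iterate of a cyclically reduced block decomposition is again cyclically
reduced, so the lengths of the iterates are bounded. But removing the cancelling `a₀` makes the
exponent sum of a positive word evolve by `v ↦ T v - e₀`, whose only fixed point `m⁻¹ • 1` is not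
integral, so no integral orbit is bounded.
-/

/-! ### The companion map of the `(m + 1)`-step Fibonacci recurrence -/

/-- The companion map of the recurrence `xₖ₊ₘ₊₁ = xₖ + ⋯ + xₖ₊ₘ`: it pushes the sum of all
entries in front and forgets the last entry. This is the action of `bonacciAut` on exponent
sums. -/
def bonacciMap (R : Type*) [Semiring R] (m : ℕ) : Module.End R (Fin (m + 1) → R) where
  toFun v := Fin.cons (∑ i, v i) (Fin.init v)
  map_add' v w := by
    ext i
    cases i using Fin.cases <;> simp [Finset.sum_add_distrib, Fin.init]
  map_smul' c v := by
    ext i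
    cases i using Fin.cases <;> simp [Finset.mul_sum, Fin.init]

section Semiring

variable {R S : Type*} [Semiring R] [Semiring S] {m : ℕ}

@[simp]
theorem bonacciMap_apply_zero (v : Fin (m + 1) → R) : bonacciMap R m v 0 = ∑ i, v i := rfl

@[simp]
theorem bonacciMap_apply_succ (v : Fin (m + 1) → R) (k : Fin m) :
    bonacciMap R m v k.succ = v k.castSucc := rfl

theorem bonacciMap_pow_add_apply (v : Fin (m + 1) → R) (k : ℕ) (i : Fin (m + 1)) :
    (bonacciMap R m ^ (k + i)) v i = (bonacciMap R m ^ k) v 0 := by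
  induction i using Fin.induction with
  | zero => rfl
  | succ i ih =>
    rw [Fin.val_succ, ← add_assoc, pow_succ', Module.End.mul_apply, bonacciMap_apply_succ]
    exact ih

theorem bonacciMap_pow_comp_ringHom (f : R →+* S) (k : ℕ) (v : Fin (m + 1) → R) :
    (bonacciMap S m ^ k) (f ∘ v) = f ∘ (bonacciMap R m ^ k) v := by
  induction k with
  | zero => rfl
  | succ k ih =>
    simp only [pow_succ', Module.End.mul_apply, ih]
    ext i
    cases i using Fin.cases <;> simp

end Semiring

section Ring

variable {R : Type*} [Ring R] {m : ℕ}

theorem bonacciMap_injective : Function.Injective (bonacciMap R m) := by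
  refine (injective_iff_map_eq_zero _).2 fun v hv => ?_
  have hinit (k : Fin m) : v k.castSucc = 0 := by rw [← bonacciMap_apply_succ v k, hv]; rfl
  have hsum : ∑ i, v i = 0 := by rw [← bonacciMap_apply_zero v, hv]; rfl
  ext i
  cases i using Fin.lastCases with
  | last => simpa [Fin.sum_univ_castSucc, hinit] using hsum
  | cast k => exact hinit k

theorem bonacciMap_pow_injective (k : ℕ) : Function.Injective ⇑(bonacciMap R m ^ k) := by
  rw [Module.End.coe_pow]
  exact bonacciMap_injective.iterate k

theorem sum_bonacciMap (v : Fin (m + 1) → R) :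
    ∑ i, bonacciMap R m v i = 2 * ∑ i, v i - v (Fin.last m) := by
  rw [Fin.sum_univ_succ]
  simp only [bonacciMap_apply_zero, bonacciMap_apply_succ]
  rw [Fin.sum_univ_castSucc, two_mul]
  abel

theorem bonacciMap_pow_apply_zero_recurrence (v : Fin (m + 1) → R) (k : ℕ) :
    (bonacciMap R m ^ k) v 0 + (bonacciMap R m ^ (k + (m + 1) + 1)) v 0 =
      2 * (bonacciMap R m ^ (k + (m + 1))) v 0 := by
  have hlast : (bonacciMap R m ^ (k + m)) v (Fin.last m) = (bonacciMap R m ^ k) v 0 :=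
    bonacciMap_pow_add_apply v k (Fin.last m)
  simp only [← add_assoc, pow_succ' _ (k + m + 1), pow_succ' _ (k + m), Module.End.mul_apply,
    bonacciMap_apply_zero, sum_bonacciMap, hlast]
  abel

end Ring

section LinearOrderedRing

variable {R : Type*} [CommRing R] [LinearOrder R] [IsStrictOrderedRing R] {m : ℕ}

-- Maximum principle: a maximum `x (k + d)` is the mean of `x k` and `x (k + d + 1)`, so it
-- propagates to all later terms.
theorem periodic_eq_of_midpoint {x : ℕ → R} {N d : ℕ} (hN : 0 < N)
    (hx : Function.Periodic x N) (hmid : ∀ k, x k + x (k + d + 1) = 2 * x (k + d)) (k : ℕ) :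
    x k = x 0 := by
  obtain ⟨k₀, -, hmax⟩ := Finset.exists_max_image (Finset.range N) x ⟨0, Finset.mem_range.2 hN⟩
  have hle (k : ℕ) : x k ≤ x k₀ := by
    rw [← hx.map_mod_nat k]
    exact hmax _ (Finset.mem_range.2 (Nat.mod_lt k hN))
  have hlater (j : ℕ) : x (k₀ + d * N + j) = x k₀ := by
    induction j with
    | zero => simpa using hx.nsmul d k₀
    | succ j ih =>
      obtain ⟨q, hq⟩ : ∃ q, k₀ + d * N + j = q + d :=
        Nat.exists_eq_add_of_le' (by nlinarith)
      rw [hq] at ih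
      rw [← add_assoc, hq]
      linarith [hmid q, hle q, hle (q + d + 1)]
  have hconst (k : ℕ) : x k = x k₀ := by
    obtain ⟨j, hj⟩ : ∃ j, k + (k₀ + d) * N = k₀ + d * N + j :=
      Nat.exists_eq_add_of_le (by nlinarith)
    have := hx.nsmul (k₀ + d) k
    rw [smul_eq_mul, hj, hlater] at this
    exact this.symm
  rw [hconst k, hconst 0]

theorem eq_zero_of_bonacciMap_pow_eq_self (hm : m ≠ 0) {N : ℕ} (hN : 0 < N) {v : Fin (m + 1) → R}
    (hv : (bonacciMap R m ^ N) v = v) : v = 0 := by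
  set x : ℕ → R := fun k => (bonacciMap R m ^ k) v 0
  have hper : Function.Periodic x N := fun k => by
    simp only [x, pow_add, Module.End.mul_apply, hv]
  have hx : ∀ k, x k = x 0 :=
    periodic_eq_of_midpoint hN hper (bonacciMap_pow_apply_zero_recurrence v)
  have hconst (i : Fin (m + 1)) : (bonacciMap R m ^ m) v i = x 0 := by
    calc (bonacciMap R m ^ m) v i = (bonacciMap R m ^ (m - i + i)) v i := by
          rw [Nat.sub_add_cancel i.is_le]
      _ = x (m - i) := bonacciMap_pow_add_apply v _ i
      _ = x 0 := hx _
  have hsum : x 0 = (m + 1) * x 0 := by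
    calc x 0 = x (m + 1) := (hx _).symm
      _ = ∑ i, (bonacciMap R m ^ m) v i := by simp [x, pow_succ']
      _ = (m + 1) * x 0 := by simp [hconst]
  have hx0 : x 0 = 0 := by
    have : (m : R) * x 0 = 0 := by linear_combination -hsum
    exact (mul_eq_zero.1 this).resolve_left (Nat.cast_ne_zero.2 hm)
  refine bonacciMap_pow_injective m ?_
  ext i
  rw [hconst, hx0, map_zero, Pi.zero_apply]

end LinearOrderedRing

theorem eq_zero_of_norm_bonacciMap_pow_le {m n : ℕ} (hm : m ≠ 0) (hn : 0 < n)
    {v : Fin (m + 1) → ℤ} {C : ℝ} (hC : ∀ k, ‖(bonacciMap ℤ m ^ (n * k)) v‖ ≤ C) : v = 0 := by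
  have hfin : (Metric.closedBall (0 : Fin (m + 1) → ℤ) C).Finite :=
    (isCompact_closedBall 0 C).finite_of_discrete
  obtain ⟨a, b, hab, heq⟩ := hfin.exists_lt_map_eq_of_forall_mem
    (f := fun k => (bonacciMap ℤ m ^ (n * k)) v) fun k => mem_closedBall_zero_iff.2 (hC k)
  have hdecomp : n * b = n * a + n * (b - a) := by rw [← mul_add, Nat.add_sub_cancel' hab.le]
  refine eq_zero_of_bonacciMap_pow_eq_self hm (Nat.mul_pos hn (Nat.sub_pos_of_lt hab))
    (bonacciMap_pow_injective (n * a) ?_)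
  simp only [hdecomp, pow_add, Module.End.mul_apply] at heq
  exact heq.symm

/-- The vector `(μ, μ², …, μᵐ⁺¹)`. When its entries sum to `1`, it is an eigenvector of
`bonacciMap ℝ m` for the eigenvalue `μ⁻¹`. -/
def geomVec (m : ℕ) (μ : ℝ) : Fin (m + 1) → ℝ := fun i => μ ^ (i + 1 : ℕ)

/-- The left eigenvector of `bonacciMap ℝ m` for the eigenvalue `μ⁻¹`, when the entries of
`geomVec m μ` sum to `1`. -/
def leftEigenvec (m : ℕ) (μ : ℝ) : Fin (m + 1) → ℝ := 1 - geomVec m μ ∘ Fin.rev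

theorem exists_sum_geomVec_eq_one {m : ℕ} (hm : m ≠ 0) :
    ∃ μ : ℝ, 0 < μ ∧ μ < 1 ∧ ∑ i, geomVec m μ i = 1 := by
  have hcont : Continuous fun μ => ∑ i, geomVec m μ i := by
    unfold geomVec
    fun_prop
  have hmem : (1 : ℝ) ∈ Set.Ioo (∑ i, geomVec m 0 i) (∑ i, geomVec m 1 i) := by
    simpa [geomVec] using Nat.pos_of_ne_zero hm
  obtain ⟨μ, ⟨hpos, hlt⟩, hsum⟩ := intermediate_value_Ioo zero_le_one hcont.continuousOn hmem
  exact ⟨μ, hpos, hlt, hsum⟩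

section Perron

open Filter Topology

variable {m : ℕ} {μ : ℝ}

theorem pow_eq_of_sum_geomVec_eq_one (hμ : ∑ i, geomVec m μ i = 1) :
    μ ^ (m + 2) = 2 * μ - 1 := by
  have hgeom := geom_sum_mul μ (m + 1)
  have hfactor : ∑ i, geomVec m μ i = μ * ∑ i ∈ Finset.range (m + 1), μ ^ i := by
    rw [Finset.mul_sum, ← Fin.sum_univ_eq_sum_range (fun i => μ * μ ^ i)]
    exact Finset.sum_congr rfl fun i _ => pow_succ' μ i
  rw [hfactor] at hμ
  linear_combination (μ - 1) * hμ - μ * hgeom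

theorem sum_geomVec_rev : ∑ i, geomVec m μ (Fin.rev i) = ∑ i, geomVec m μ i :=
  Equiv.sum_comp Fin.revPerm (geomVec m μ)

theorem leftEigenvec_dotProduct (v : Fin (m + 1) → ℝ) :
    leftEigenvec m μ ⬝ᵥ v = ∑ i, v i - (geomVec m μ ∘ Fin.rev) ⬝ᵥ v := by
  rw [leftEigenvec, sub_dotProduct, one_dotProduct]

theorem bonacciMap_geomVec (hμ₀ : μ ≠ 0) (hμ : ∑ i, geomVec m μ i = 1) :
    bonacciMap ℝ m (geomVec m μ) = μ⁻¹ • geomVec m μ := by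
  ext i
  cases i using Fin.cases with
  | zero => rw [bonacciMap_apply_zero, hμ]; simp [geomVec, hμ₀]
  | succ k =>
    simp only [bonacciMap_apply_succ, geomVec, Pi.smul_apply, smul_eq_mul, Fin.val_castSucc,
      Fin.val_succ]
    rw [pow_succ' μ (k + 1), inv_mul_cancel_left₀ hμ₀]

theorem bonacciMap_pow_geomVec (hμ₀ : μ ≠ 0) (hμ : ∑ i, geomVec m μ i = 1) (k : ℕ) :
    (bonacciMap ℝ m ^ k) (geomVec m μ) = μ⁻¹ ^ k • geomVec m μ := by
  induction k with
  | zero => simp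
  | succ k ih =>
    rw [pow_succ, Module.End.mul_apply, bonacciMap_geomVec hμ₀ hμ, map_smul, ih, smul_smul,
      ← pow_succ']

theorem leftEigenvec_dotProduct_bonacciMap (hμ : ∑ i, geomVec m μ i = 1)
    (v : Fin (m + 1) → ℝ) :
    μ * (leftEigenvec m μ ⬝ᵥ bonacciMap ℝ m v) = leftEigenvec m μ ⬝ᵥ v := by
  have hshift : ∑ k : Fin m, leftEigenvec m μ k.succ * v k.castSucc =
      ∑ j : Fin (m + 1), (1 - μ ^ (Fin.rev j : ℕ)) * v j := by
    rw [Fin.sum_univ_castSucc (n := m)]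
    simp [leftEigenvec, geomVec, Fin.rev_succ, Fin.rev_castSucc]
  have hhead : leftEigenvec m μ 0 = 1 - μ ^ (m + 1) := by simp [leftEigenvec, geomVec]
  calc μ * (leftEigenvec m μ ⬝ᵥ bonacciMap ℝ m v)
      = μ * (∑ j, (1 - μ ^ (m + 1)) * v j + ∑ j, (1 - μ ^ (Fin.rev j : ℕ)) * v j) := by
        rw [dotProduct, Fin.sum_univ_succ]
        simp only [bonacciMap_apply_zero, bonacciMap_apply_succ, hshift, hhead, Finset.mul_sum]
    _ = leftEigenvec m μ ⬝ᵥ v := by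
        rw [← Finset.sum_add_distrib, Finset.mul_sum]
        refine Finset.sum_congr rfl fun j _ => ?_
        simp only [leftEigenvec, geomVec, Pi.sub_apply, Pi.one_apply, Function.comp_apply]
        linear_combination -v j * pow_eq_of_sum_geomVec_eq_one hμ

-- On the kernel of `leftEigenvec`, the entry pushed in front is a weighted mean of the others.
theorem norm_bonacciMap_le (hμ₀ : 0 ≤ μ) (hμ : ∑ i, geomVec m μ i = 1) {v : Fin (m + 1) → ℝ}
    (hv : leftEigenvec m μ ⬝ᵥ v = 0) : ‖bonacciMap ℝ m v‖ ≤ ‖v‖ := by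
  refine (pi_norm_le_iff_of_nonneg (norm_nonneg v)).2 fun i => ?_
  cases i using Fin.cases with
  | zero =>
    rw [leftEigenvec_dotProduct, sub_eq_zero] at hv
    have hweight (i : Fin (m + 1)) : 0 ≤ geomVec m μ (Fin.rev i) := pow_nonneg hμ₀ _
    calc ‖bonacciMap ℝ m v 0‖ = ‖∑ i, geomVec m μ (Fin.rev i) * v i‖ := congrArg norm hv
      _ ≤ ∑ i, geomVec m μ (Fin.rev i) * ‖v‖ := by
          refine norm_sum_le_of_le _ fun i _ => ?_
          rw [norm_mul, Real.norm_of_nonneg (hweight i)]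
          exact mul_le_mul_of_nonneg_left (norm_le_pi_norm v i) (hweight i)
      _ = ‖v‖ := by rw [← Finset.sum_mul, sum_geomVec_rev, hμ, one_mul]
  | succ k => exact norm_le_pi_norm v k.castSucc

theorem norm_bonacciMap_pow_le (hμ₀ : 0 < μ) (hμ : ∑ i, geomVec m μ i = 1)
    {v : Fin (m + 1) → ℝ} (hv : leftEigenvec m μ ⬝ᵥ v = 0) (k : ℕ) :
    ‖(bonacciMap ℝ m ^ k) v‖ ≤ ‖v‖ := by
  induction k generalizing v with
  | zero => rfl
  | succ k ih =>
    rw [pow_succ, Module.End.mul_apply]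
    refine (ih ?_).trans (norm_bonacciMap_le hμ₀.le hμ hv)
    rw [← leftEigenvec_dotProduct_bonacciMap hμ, mul_eq_zero] at hv
    exact hv.resolve_left hμ₀.ne'

theorem leftEigenvec_dotProduct_geomVec_pos (hμ₀ : 0 < μ) (hμ₁ : μ < 1) :
    0 < leftEigenvec m μ ⬝ᵥ geomVec m μ :=
  Finset.sum_pos (fun _ _ => mul_pos (sub_pos.2 (pow_lt_one₀ hμ₀.le hμ₁ (Nat.succ_ne_zero _)))
    (pow_pos hμ₀ _)) Finset.univ_nonempty

theorem tendsto_pow_smul_bonacciMap_pow (hμ₀ : 0 < μ) (hμ₁ : μ < 1)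
    (hμ : ∑ i, geomVec m μ i = 1) (v : Fin (m + 1) → ℝ) :
    Tendsto (fun k => μ ^ k • (bonacciMap ℝ m ^ k) v) atTop
      (𝓝 ((leftEigenvec m μ ⬝ᵥ v / leftEigenvec m μ ⬝ᵥ geomVec m μ) • geomVec m μ)) := by
  set c := leftEigenvec m μ ⬝ᵥ v / leftEigenvec m μ ⬝ᵥ geomVec m μ
  set v₀ := v - c • geomVec m μ
  have hv₀ : leftEigenvec m μ ⬝ᵥ v₀ = 0 := by
    rw [dotProduct_sub, dotProduct_smul, smul_eq_mul,
      div_mul_cancel₀ _ (leftEigenvec_dotProduct_geomVec_pos hμ₀ hμ₁).ne', sub_self]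
  have hsplit (k : ℕ) :
      μ ^ k • (bonacciMap ℝ m ^ k) v = c • geomVec m μ + μ ^ k • (bonacciMap ℝ m ^ k) v₀ := by
    rw [map_sub, map_smul, bonacciMap_pow_geomVec hμ₀.ne' hμ, smul_sub, smul_comm c, smul_smul,
      ← mul_pow, mul_inv_cancel₀ hμ₀.ne', one_pow, one_smul, add_sub_cancel]
  have herror : Tendsto (fun k => μ ^ k • (bonacciMap ℝ m ^ k) v₀) atTop (𝓝 0) := by
    have hpow := (tendsto_pow_atTop_nhds_zero_of_lt_one hμ₀.le hμ₁).mul_const ‖v₀‖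
    rw [zero_mul] at hpow
    refine squeeze_zero_norm (fun k => ?_) hpow
    rw [norm_smul, Real.norm_of_nonneg (pow_nonneg hμ₀.le k)]
    exact mul_le_mul_of_nonneg_left (norm_bonacciMap_pow_le hμ₀ hμ hv₀ k) (pow_nonneg hμ₀.le k)
  simpa only [hsplit, add_zero] using herror.const_add (c • geomVec m μ)

theorem dotProduct_geomVec_eq_zero_of_forall_pow (hμ₀ : 0 < μ) (hμ₁ : μ < 1)
    (hμ : ∑ i, geomVec m μ i = 1) {v g : Fin (m + 1) → ℝ} (hv : leftEigenvec m μ ⬝ᵥ v ≠ 0)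
    {n : ℕ} (hn : 0 < n) (hg : ∀ j, g ⬝ᵥ (bonacciMap ℝ m ^ (n * j)) v = 0) :
    g ⬝ᵥ geomVec m μ = 0 := by
  have hcont : Continuous fun w => g ⬝ᵥ w := continuous_const.dotProduct continuous_id
  have hlim := (hcont.tendsto _).comp
    ((tendsto_pow_smul_bonacciMap_pow hμ₀ hμ₁ hμ v).comp (tendsto_id.const_mul_atTop' hn))
  have hterms : Tendsto (fun j => g ⬝ᵥ (μ ^ (n * j) • (bonacciMap ℝ m ^ (n * j)) v)) atTop
      (𝓝 0) := by
    simp only [dotProduct_smul, hg, smul_zero, tendsto_const_nhds]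
  have hzero := tendsto_nhds_unique hlim hterms
  rw [dotProduct_smul, smul_eq_mul, mul_eq_zero] at hzero
  exact hzero.resolve_left (div_ne_zero hv (leftEigenvec_dotProduct_geomVec_pos hμ₀ hμ₁).ne')

theorem eq_zero_of_leftEigenvec_dotProduct_eq_zero (hm : m ≠ 0) (hμ₀ : 0 < μ)
    (hμ : ∑ i, geomVec m μ i = 1) {v : Fin (m + 1) → ℤ}
    (hv : leftEigenvec m μ ⬝ᵥ ((↑) ∘ v) = 0) : v = 0 := by
  have hnorm (w : Fin (m + 1) → ℤ) : ‖((↑) ∘ w : Fin (m + 1) → ℝ)‖ = ‖w‖ :=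
    le_antisymm ((pi_norm_le_iff_of_nonneg (norm_nonneg _)).2 fun i => norm_le_pi_norm w i)
      ((pi_norm_le_iff_of_nonneg (norm_nonneg _)).2 fun i =>
        norm_le_pi_norm (Int.cast ∘ w : Fin (m + 1) → ℝ) i)
  have hbound (k : ℕ) : ‖(bonacciMap ℤ m ^ (1 * k)) v‖ ≤ ‖v‖ :=
    calc ‖(bonacciMap ℤ m ^ (1 * k)) v‖
        = ‖((↑) ∘ (bonacciMap ℤ m ^ (1 * k)) v : Fin (m + 1) → ℝ)‖ := (hnorm _).symm
      _ = ‖(bonacciMap ℝ m ^ (1 * k)) ((↑) ∘ v)‖ :=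
        congrArg norm (bonacciMap_pow_comp_ringHom (Int.castRingHom ℝ) (1 * k) v).symm
      _ ≤ ‖((↑) ∘ v : Fin (m + 1) → ℝ)‖ := norm_bonacciMap_pow_le hμ₀ hμ hv _
      _ = ‖v‖ := hnorm v
  exact eq_zero_of_norm_bonacciMap_pow_le hm one_pos hbound

-- A linear relation among the entries of `geomVec` reflects to one among those of `leftEigenvec`.
theorem eq_zero_of_dotProduct_geomVec_eq_zero (hm : m ≠ 0) (hμ₀ : 0 < μ)
    (hμ : ∑ i, geomVec m μ i = 1) {g : Fin (m + 1) → ℤ}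
    (hg : ((↑) ∘ g) ⬝ᵥ geomVec m μ = 0) : g = 0 := by
  set s : ℤ := ∑ i, g i with hs
  have hrelation : leftEigenvec m μ ⬝ᵥ ((↑) ∘ fun i => s - m * g (Fin.rev i)) = 0 := by
    have hsplit : ((↑) ∘ fun i => s - m * g (Fin.rev i) : Fin (m + 1) → ℝ) =
        (s : ℝ) • 1 - (m : ℝ) • (((↑) ∘ g) ∘ Fin.revPerm) := by
      ext i
      simp
    have hone : leftEigenvec m μ ⬝ᵥ 1 = m := by
      rw [leftEigenvec_dotProduct, dotProduct_one]
      simp [sum_geomVec_rev, hμ]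
    have hrev : leftEigenvec m μ ⬝ᵥ (((↑) ∘ g) ∘ Fin.revPerm) = s := by
      have hsum : ∑ i, (((↑) ∘ g) ∘ Fin.revPerm : Fin (m + 1) → ℝ) i = s :=
        (Equiv.sum_comp Fin.revPerm (Int.cast ∘ g)).trans (Int.cast_sum _ _).symm
      have hgeom : (geomVec m μ ∘ Fin.rev) ⬝ᵥ (((↑) ∘ g) ∘ Fin.revPerm) = 0 :=
        (comp_equiv_dotProduct_comp_equiv _ _ Fin.revPerm).trans ((dotProduct_comm _ _).trans hg)
      rw [leftEigenvec_dotProduct, hsum, hgeom, sub_zero]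
    rw [hsplit, dotProduct_sub, dotProduct_smul, dotProduct_smul, hone, hrev, smul_eq_mul,
      smul_eq_mul, mul_comm, sub_self]
  have hconst (i : Fin (m + 1)) : m * g i = s := by
    have := congrFun (eq_zero_of_leftEigenvec_dotProduct_eq_zero hm hμ₀ hμ hrelation) (Fin.rev i)
    rw [Fin.rev_rev, Pi.zero_apply, sub_eq_zero] at this
    exact this.symm
  have hs0 : s = 0 := by
    have hsum : (m : ℤ) * s = (m + 1) * s := by
      rw [hs, Finset.mul_sum, Finset.sum_congr rfl fun i _ => hconst i]
      simp [hs]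
    linarith
  ext i
  have := hconst i
  rw [hs0, mul_eq_zero, Nat.cast_eq_zero] at this
  exact this.resolve_left hm

end Perron

theorem eq_zero_of_forall_dotProduct_bonacciMap_pow {m n : ℕ} (hm : m ≠ 0) (hn : 0 < n)
    {v g : Fin (m + 1) → ℤ} (hv : v ≠ 0) (hg : ∀ j, g ⬝ᵥ (bonacciMap ℤ m ^ (n * j)) v = 0) :
    g = 0 := by
  obtain ⟨μ, hμ₀, hμ₁, hμ⟩ := exists_sum_geomVec_eq_one hm
  have hv' : leftEigenvec m μ ⬝ᵥ ((↑) ∘ v) ≠ 0 :=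
    mt (eq_zero_of_leftEigenvec_dotProduct_eq_zero hm hμ₀ hμ) hv
  refine eq_zero_of_dotProduct_geomVec_eq_zero hm hμ₀ hμ
    (dotProduct_geomVec_eq_zero_of_forall_pow hμ₀ hμ₁ hμ hv' hn fun j => ?_)
  have hcast := congrArg (Int.castRingHom ℝ) (hg j)
  rw [RingHom.map_dotProduct, map_zero, ← bonacciMap_pow_comp_ringHom] at hcast
  exact hcast

/-! ### Conjugacy and free factors -/

section Conj

variable {G : Type*} [Group G]

theorem isConj_mul_comm (g h : G) : IsConj (g * h) (h * g) :=
  isConj_iff.2 ⟨h, by group⟩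

theorem isConj_pow_mul_apply {φ : MulAut G} {n : ℕ} {g : G}
    (h : IsConj ((φ ^ n) g) g) (j : ℕ) : IsConj ((φ ^ (n * j)) g) g := by
  induction j with
  | zero => exact IsConj.refl g
  | succ j ih =>
    rw [mul_add_one, pow_add, MulAut.mul_apply]
    exact ((φ ^ (n * j)).toMonoidHom.map_isConj h).trans ih

theorem exists_mem_isConj_pow_apply {A : Subgroup G} {φ : MulAut G} {u : G}
    (h : A.map φ.toMonoidHom = A.map (MulAut.conj u).toMonoidHom) {a : G} (ha : a ∈ A) (j : ℕ) :
    ∃ b ∈ A, IsConj ((φ ^ j) a) b := by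
  induction j with
  | zero => exact ⟨a, ha, IsConj.refl a⟩
  | succ j ih =>
    obtain ⟨b, hb, hconj⟩ := ih
    obtain ⟨c, hc, hcb⟩ : φ b ∈ A.map (MulAut.conj u).toMonoidHom := h ▸ ⟨b, hb, rfl⟩
    refine ⟨c, hc, ?_⟩
    rw [pow_succ', MulAut.mul_apply]
    exact (φ.toMonoidHom.map_isConj hconj).trans (hcb ▸ (isConj_iff.2 ⟨u, rfl⟩).symm)

end Conj

section FreeFactor

variable {G : Type*} [Group G] {A : Subgroup G}

theorem exists_hom_int_apply_ne_one [IsFreeGroup G] (hA : A ≠ ⊥) :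
    ∃ (f : A →* Multiplicative ℤ) (a : A), f a ≠ 1 := by
  have hgen : Nonempty (IsFreeGroup.Generators A) := by
    by_contra hempty
    rw [not_nonempty_iff] at hempty
    have := (IsFreeGroup.toFreeGroup A).subsingleton
    exact hA A.eq_bot_of_subsingleton
  obtain ⟨x⟩ := hgen
  refine ⟨IsFreeGroup.lift fun _ => .ofAdd 1, IsFreeGroup.of x, ?_⟩
  rw [IsFreeGroup.lift_of, Ne, ofAdd_eq_one]
  exact one_ne_zero

theorem exists_hom_extend_of_bijective_lift {B : Subgroup G}
    (hB : Function.Bijective (Monoid.Coprod.lift A.subtype B.subtype)) {H : Type*} [Group H]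
    (f : A →* H) (g : B →* H) : ∃ F : G →* H, (∀ a : A, F a = f a) ∧ ∀ b : B, F b = g b := by
  let e := MulEquiv.ofBijective _ hB
  refine ⟨(Monoid.Coprod.lift f g).comp e.symm.toMonoidHom, fun a => ?_, fun b => ?_⟩
  · have : e.symm a = Monoid.Coprod.inl a := e.symm_apply_eq.2 (by simp [e])
    simp [this]
  · have : e.symm b = Monoid.Coprod.inr b := e.symm_apply_eq.2 (by simp [e])
    simp [this]

theorem IsFreeFactor.exists_hom_int_ne_one_of_ne_top [IsFreeGroup G] (hA : IsFreeFactor A)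
    (hA' : A ≠ ⊤) : ∃ F : G →* Multiplicative ℤ, F ≠ 1 ∧ ∀ a ∈ A, F a = 1 := by
  obtain ⟨B, hB⟩ := hA
  have hBne : B ≠ ⊥ := by
    rintro rfl
    have hrange := MonoidHom.range_eq_top.2 hB.surjective
    rw [Monoid.Coprod.range_lift, Subgroup.range_subtype, Subgroup.range_subtype,
      sup_bot_eq] at hrange
    exact hA' hrange
  obtain ⟨f, b, hb⟩ := exists_hom_int_apply_ne_one hBne
  obtain ⟨F, hFA, hFB⟩ := exists_hom_extend_of_bijective_lift hB 1 f
  exact ⟨F, fun h => hb (by rw [← hFB, h, MonoidHom.one_apply]), fun a ha => hFA ⟨a, ha⟩⟩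

theorem IsFreeFactor.exists_mem_hom_int_ne_one [IsFreeGroup G] (hA : IsFreeFactor A)
    (hA' : A ≠ ⊥) : ∃ a ∈ A, ∃ F : G →* Multiplicative ℤ, F a ≠ 1 := by
  obtain ⟨B, hB⟩ := hA
  obtain ⟨f, a, ha⟩ := exists_hom_int_apply_ne_one hA'
  obtain ⟨F, hFA, -⟩ := exists_hom_extend_of_bijective_lift hB f 1
  exact ⟨a, a.2, F, by rwa [hFA]⟩

end FreeFactor

section ExponentSum

variable {X : Type*} [DecidableEq X]

/-- The exponent sum of each generator in `w`; this is the abelianization of `FreeGroup X`. -/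
def exponentSum (w : FreeGroup X) : X → ℤ :=
  (FreeGroup.lift (fun i => Multiplicative.ofAdd (Pi.single i (1 : ℤ))) w).toAdd

@[simp]
theorem exponentSum_one : exponentSum (1 : FreeGroup X) = 0 := by simp [exponentSum]

@[simp]
theorem exponentSum_mul (v w : FreeGroup X) :
    exponentSum (v * w) = exponentSum v + exponentSum w := by
  simp [exponentSum]

@[simp]
theorem exponentSum_inv (w : FreeGroup X) : exponentSum w⁻¹ = -exponentSum w := by
  simp [exponentSum]

@[simp]
theorem exponentSum_of (i : X) : exponentSum (FreeGroup.of i) = Pi.single i 1 := by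
  simp [exponentSum]

theorem exponentSum_eq_of_isConj {v w : FreeGroup X} (h : IsConj v w) :
    exponentSum v = exponentSum w := by
  obtain ⟨u, rfl⟩ := isConj_iff.1 h
  simp

theorem toAdd_map_eq_dotProduct_exponentSum [Fintype X] (F : FreeGroup X →* Multiplicative ℤ)
    (w : FreeGroup X) :
    (F w).toAdd = (fun i => (F (FreeGroup.of i)).toAdd) ⬝ᵥ exponentSum w := by
  induction w using FreeGroup.induction_on with
  | C1 => simp
  | of i => simp
  | inv_of i _ => simp
  | mul v w hv hw => simp [hv, hw, dotProduct_add]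

theorem IsFreeFactor.exists_mem_exponentSum_ne_zero [Finite X] {A : Subgroup (FreeGroup X)}
    (hA : IsFreeFactor A) (hA' : A ≠ ⊥) : ∃ a ∈ A, exponentSum a ≠ 0 := by
  have := Fintype.ofFinite X
  obtain ⟨a, ha, F, hF⟩ := hA.exists_mem_hom_int_ne_one hA'
  refine ⟨a, ha, fun h => hF ?_⟩
  rw [← toAdd_eq_zero, toAdd_map_eq_dotProduct_exponentSum, h, dotProduct_zero]

theorem IsFreeFactor.exists_dotProduct_exponentSum_eq_zero [Fintype X]
    {A : Subgroup (FreeGroup X)} (hA : IsFreeFactor A) (hA' : A ≠ ⊤) :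
    ∃ g : X → ℤ, g ≠ 0 ∧ ∀ a ∈ A, g ⬝ᵥ exponentSum a = 0 := by
  obtain ⟨F, hF, hFA⟩ := hA.exists_hom_int_ne_one_of_ne_top hA'
  refine ⟨fun i => (F (FreeGroup.of i)).toAdd, fun h => hF ?_, fun a ha => ?_⟩
  · ext i
    exact congrFun h i
  · rw [← toAdd_map_eq_dotProduct_exponentSum, hFA a ha, toAdd_one]

end ExponentSum

/-! ### Block decompositions -/

section CyclicallyReduced

variable {X : Type*} {W W₁ W₂ : List (X × Bool)}

theorem norm_mk_pow_of_isCyclicallyReduced [DecidableEq X]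
    (hW : FreeGroup.IsCyclicallyReduced W) (k : ℕ) :
    (FreeGroup.mk W ^ k).norm = k * W.length := by
  rw [FreeGroup.norm, FreeGroup.toWord_pow, FreeGroup.toWord_mk, hW.isReduced.reduce_eq,
    (hW.flatten_replicate k).isReduced.reduce_eq]
  simp

theorem norm_conj_le [DecidableEq X] (c g : FreeGroup X) :
    (c * g * c⁻¹).norm ≤ g.norm + 2 * c.norm := by
  have hmul := FreeGroup.norm_mul_le (c * g) c⁻¹
  have hmul' := FreeGroup.norm_mul_le c g
  rw [FreeGroup.norm_inv_eq] at hmul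
  lia

-- Compare the norms of `k`-th powers, on which conjugation has an effect bounded in `k`.
theorem length_le_of_isConj_mk (h₁ : FreeGroup.IsCyclicallyReduced W₁)
    (h₂ : FreeGroup.IsCyclicallyReduced W₂)
    (h : IsConj (FreeGroup.mk W₁) (FreeGroup.mk W₂)) : W₂.length ≤ W₁.length := by
  classical
  obtain ⟨c, hc⟩ := isConj_iff.1 h
  have hpow (k : ℕ) : k * W₂.length ≤ k * W₁.length + 2 * c.norm := by
    rw [← norm_mk_pow_of_isCyclicallyReduced h₁, ← norm_mk_pow_of_isCyclicallyReduced h₂, ← hc,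
      conj_pow]
    exact norm_conj_le c _
  by_contra! hlt
  nlinarith [hpow (2 * c.norm + 1)]

theorem length_eq_of_isConj_mk (h₁ : FreeGroup.IsCyclicallyReduced W₁)
    (h₂ : FreeGroup.IsCyclicallyReduced W₂)
    (h : IsConj (FreeGroup.mk W₁) (FreeGroup.mk W₂)) : W₁.length = W₂.length :=
  le_antisymm (length_le_of_isConj_mk h₂ h₁ h.symm) (length_le_of_isConj_mk h₁ h₂ h)

end CyclicallyReduced

section Rotation

open scoped List

variable {α : Type*}

theorem exists_isRotated_cons_of_mem {x : α} {l : List α} (hx : x ∈ l) :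
    ∃ r, l ~r x :: r := by
  obtain ⟨l₁, l₂, rfl⟩ := List.append_of_mem hx
  exact ⟨l₂ ++ l₁, List.isRotated_append⟩

theorem isChain_append_self {R : α → α → Prop} {l : List α}
    (hpair : ∀ x y r, l ~r x :: y :: r → R x y) (hsingle : ∀ x, l = [x] → R x x) :
    (l ++ l).IsChain R := by
  have hl : l.IsChain R := by
    refine (List.isChain_isInfix l).imp fun x y ⟨l₁, l₂, h⟩ => hpair x y (l₂ ++ l₁) ?_
    rw [← h, List.append_assoc]
    exact List.isRotated_append
  refine List.isChain_append.2 ⟨hl, hl, fun x hx y hy => ?_⟩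
  obtain ⟨l, rfl⟩ : ∃ r, l = y :: r := List.head?_eq_some_iff.1 hy
  rcases List.eq_nil_or_concat' l with rfl | ⟨l, z, rfl⟩
  · obtain rfl : y = x := by simpa using hx
    exact hsingle y rfl
  · rw [← List.cons_append, List.getLast?_concat, Option.mem_some] at hx
    subst hx
    exact hpair z y l (List.isRotated_append (l := y :: l) (l' := [z]))

end Rotation

section Blocks

open scoped List

variable {X : Type*}

/-- The element of the free group given by a positive word. -/
def posProd (p : List X) : FreeGroup X := (p.map FreeGroup.of).prod

@[simp]
theorem posProd_nil : posProd ([] : List X) = 1 := rfl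

@[simp]
theorem posProd_cons (a : X) (p : List X) : posProd (a :: p) = FreeGroup.of a * posProd p := by
  simp [posProd]

@[simp]
theorem posProd_append (p q : List X) : posProd (p ++ q) = posProd p * posProd q := by
  simp [posProd]

theorem lift_posProd {Y : Type*} (f : X → List Y) (p : List X) :
    FreeGroup.lift (fun i => posProd (f i)) (posProd p) = posProd (p.flatMap f) := by
  induction p with
  | nil => simp
  | cons a p ih => simp [ih]

theorem mk_map_true (p : List X) : FreeGroup.mk (p.map (·, true)) = posProd p := by
  induction p with
  | nil => rfl
  | cons a p ih => rw [posProd_cons, ← ih, FreeGroup.of, FreeGroup.mul_mk]; rfl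

theorem mk_map_false_reverse (p : List X) :
    FreeGroup.mk (p.reverse.map (·, false)) = (posProd p)⁻¹ := by
  rw [← mk_map_true, FreeGroup.inv_mk]
  simp [FreeGroup.invRev, Function.comp_def]

/-- A pair `(p, q)` of positive words, standing for the element `p * q⁻¹` of the free group. -/
abbrev Block (X : Type*) := List X × List X

/-- The word in letters and inverse letters spelled by a block. -/
def Block.letters (x : Block X) : List (X × Bool) :=
  x.1.map (·, true) ++ x.2.reverse.map (·, false)

/-- The product of the elements `p * q⁻¹` over a list of blocks `(p, q)`. -/
def blockProd (l : List (Block X)) : FreeGroup X :=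
  (l.map fun x => posProd x.1 * (posProd x.2)⁻¹).prod

/-- The word in letters and inverse letters spelled by a list of blocks. -/
def blockLetters (l : List (Block X)) : List (X × Bool) :=
  l.flatMap Block.letters

/-- The number of letters of `blockLetters l`. -/
def blockLength (l : List (Block X)) : ℕ := (l.map fun x => x.1.length + x.2.length).sum

@[simp]
theorem blockProd_nil : blockProd ([] : List (Block X)) = 1 := rfl

@[simp]
theorem blockProd_cons (x : Block X) (l : List (Block X)) :
    blockProd (x :: l) = posProd x.1 * (posProd x.2)⁻¹ * blockProd l := by
  simp [blockProd]

@[simp]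
theorem blockProd_append (l l' : List (Block X)) :
    blockProd (l ++ l') = blockProd l * blockProd l' := by
  simp [blockProd]

@[simp]
theorem blockLength_cons (x : Block X) (l : List (Block X)) :
    blockLength (x :: l) = x.1.length + x.2.length + blockLength l := by
  simp [blockLength]

theorem length_blockLetters (l : List (Block X)) : (blockLetters l).length = blockLength l := by
  simp [blockLetters, Block.letters, blockLength, List.length_flatMap]

theorem mk_blockLetters (l : List (Block X)) : FreeGroup.mk (blockLetters l) = blockProd l := by
  induction l with
  | nil => rfl
  | cons x l ih =>
    rw [blockProd_cons, ← ih, ← mk_map_true, ← mk_map_false_reverse, FreeGroup.mul_mk,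
      FreeGroup.mul_mk]
    rfl

theorem exists_blockProd_eq (g : FreeGroup X) : ∃ l : List (Block X), blockProd l = g := by
  induction g using FreeGroup.induction_on with
  | C1 => exact ⟨[], rfl⟩
  | of i => exact ⟨[([i], [])], by simp⟩
  | inv_of i _ => exact ⟨[([], [i])], by simp⟩
  | mul g h hg hh =>
    obtain ⟨l, rfl⟩ := hg
    obtain ⟨l', rfl⟩ := hh
    exact ⟨l ++ l', blockProd_append l l'⟩

theorem isConj_blockProd_of_isRotated {l l' : List (Block X)} (h : l ~r l') :
    IsConj (blockProd l) (blockProd l') := by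
  obtain ⟨k, hk, rfl⟩ := List.isRotated_iff_mod.1 h
  rw [List.rotate_eq_drop_append_take hk, blockProd_append]
  conv_lhs => rw [← List.take_append_drop k l, blockProd_append]
  exact isConj_mul_comm _ _

/-- The list of blocks spells a cyclically reduced word in which no block has an empty half. -/
structure IsCyclicallyReducedBlocks (l : List (Block X)) : Prop where
  fst_ne_nil : ∀ x ∈ l, x.1 ≠ []
  snd_ne_nil : ∀ x ∈ l, x.2 ≠ []
  getLast?_ne : ∀ x ∈ l, x.1.getLast? ≠ x.2.getLast?
  isChain : (l ++ l).IsChain fun x y => x.2.head? ≠ y.1.head?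

theorem Block.isReduced_letters {x : Block X} (hx : x.1.getLast? ≠ x.2.getLast?) :
    FreeGroup.IsReduced x.letters := by
  refine List.isChain_append.2 ⟨?_, ?_, ?_⟩
  · exact (List.isChain_map _).2 ((List.isChain_isInfix _).imp fun _ _ _ _ => rfl)
  · exact (List.isChain_map _).2 ((List.isChain_isInfix _).imp fun _ _ _ _ => rfl)
  · simp only [List.getLast?_map, List.head?_map, List.head?_reverse, Option.mem_def,
      Option.map_eq_some_iff]
    rintro _ ⟨a, ha, rfl⟩ _ ⟨b, hb, rfl⟩ rfl
    exact absurd (ha.trans hb.symm) hx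

theorem Block.snd_eq_of_mem_getLast?_of_mem_head? {x y : Block X} (hx : x.2 ≠ []) (hy : y.1 ≠ [])
    (hxy : x.2.head? ≠ y.1.head?) {a b : X × Bool} (ha : a ∈ x.letters.getLast?)
    (hb : b ∈ y.letters.head?) (hab : a.1 = b.1) : a.2 = b.2 := by
  rw [letters, List.getLast?_append_of_ne_nil _ (by simpa using hx)] at ha
  rw [letters, List.head?_append_of_ne_nil _ (by simpa using hy)] at hb
  simp only [List.getLast?_map, List.head?_map, List.getLast?_reverse, Option.mem_def,
    Option.map_eq_some_iff] at ha hb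
  obtain ⟨a, ha, rfl⟩ := ha
  obtain ⟨b, hb, rfl⟩ := hb
  obtain rfl : a = b := hab
  exact absurd (ha.trans hb.symm) hxy

theorem IsCyclicallyReducedBlocks.isCyclicallyReduced_blockLetters {l : List (Block X)}
    (hl : IsCyclicallyReducedBlocks l) : FreeGroup.IsCyclicallyReduced (blockLetters l) := by
  have hne : [] ∉ (l ++ l).map Block.letters := by
    simpa [Block.letters] using fun hx => hl.fst_ne_nil _ hx rfl
  have hdouble : FreeGroup.IsReduced (blockLetters l ++ blockLetters l) := by
    rw [blockLetters, ← List.flatMap_append, List.flatMap, FreeGroup.IsReduced,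
      List.isChain_flatten hne, List.isChain_map]
    refine ⟨fun w hw => ?_, hl.isChain.imp_of_mem_imp fun x y hx hy hxy a ha b hb => ?_⟩
    · obtain ⟨x, hx, rfl⟩ := List.mem_map.1 hw
      exact Block.isReduced_letters (hl.getLast?_ne x (by simpa using hx))
    · exact Block.snd_eq_of_mem_getLast?_of_mem_head? (hl.snd_ne_nil x (by simpa using hx))
        (hl.fst_ne_nil y (by simpa using hy)) hxy ha hb
  exact ⟨(List.isChain_append.1 hdouble).1, (List.isChain_append.1 hdouble).2.2⟩

theorem IsCyclicallyReducedBlocks.blockLength_eq {l l' : List (Block X)}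
    (hl : IsCyclicallyReducedBlocks l) (hl' : IsCyclicallyReducedBlocks l')
    (h : IsConj (blockProd l) (blockProd l')) : blockLength l = blockLength l' := by
  rw [← mk_blockLetters, ← mk_blockLetters] at h
  rw [← length_blockLetters, ← length_blockLetters]
  exact length_eq_of_isConj_mk hl.isCyclicallyReduced_blockLetters
    hl'.isCyclicallyReduced_blockLetters h

theorem length_fst_le_blockLength {l : List (Block X)} {x : Block X} (hx : x ∈ l) :
    x.1.length ≤ blockLength l :=
  (Nat.le_add_right _ _).trans (List.single_le_sum (by simp) _ (List.mem_map_of_mem hx))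

theorem blockLength_eq_of_isRotated {l l' : List (Block X)} (h : l ~r l') :
    blockLength l = blockLength l' :=
  (h.perm.map _).sum_eq

/-- The least number of blocks needed to express a conjugate of `g`. -/
def blockNumber (g : FreeGroup X) : ℕ :=
  sInf {k | ∃ l : List (Block X), IsConj g (blockProd l) ∧ l.length = k}

theorem blockNumber_le {g : FreeGroup X} {l : List (Block X)} (hl : IsConj g (blockProd l)) :
    blockNumber g ≤ l.length :=
  Nat.sInf_le ⟨l, hl, rfl⟩

theorem exists_isConj_blockProd_length_eq_blockNumber (g : FreeGroup X) :
    ∃ l : List (Block X), IsConj g (blockProd l) ∧ l.length = blockNumber g := by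
  obtain ⟨l, hl⟩ := exists_blockProd_eq g
  exact Nat.sInf_mem (s := {k | ∃ l : List (Block X), IsConj g (blockProd l) ∧ l.length = k})
    ⟨l.length, l, hl ▸ IsConj.refl g, rfl⟩

theorem blockNumber_eq_of_isConj {g h : FreeGroup X} (hgh : IsConj g h) :
    blockNumber g = blockNumber h := by
  have hiff (l : List (Block X)) : IsConj g (blockProd l) ↔ IsConj h (blockProd l) :=
    ⟨hgh.symm.trans, hgh.trans⟩
  simp only [blockNumber, hiff]

theorem exponentSum_posProd [DecidableEq X] (p : List X) (i : X) :
    exponentSum (posProd p) i = p.count i := by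
  induction p with
  | nil => simp
  | cons a p ih =>
    rw [posProd_cons, exponentSum_mul, exponentSum_of, Pi.add_apply, ih, Pi.single_apply]
    obtain rfl | h := eq_or_ne i a
    · simp [add_comm]
    · simp [h, List.count_cons_of_ne h.symm]

theorem eq_nil_of_exponentSum_posProd_eq_zero [DecidableEq X] {p : List X}
    (hp : exponentSum (posProd p) = 0) : p = [] := by
  refine List.eq_nil_iff_forall_not_mem.2 fun i => List.count_eq_zero.1 ?_
  exact Int.natCast_eq_zero.1 ((exponentSum_posProd p i).symm.trans (congrFun hp i))

theorem ne_nil_of_length_eq_blockNumber [DecidableEq X] {g : FreeGroup X} (hg : g ≠ 1)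
    (hg₀ : exponentSum g = 0) {l : List (Block X)} (hl : IsConj g (blockProd l))
    (hlen : l.length = blockNumber g) {x : Block X} (hx : x ∈ l) : x.1 ≠ [] ∧ x.2 ≠ [] := by
  obtain ⟨r, hr⟩ := exists_isRotated_cons_of_mem hx
  replace hl := hl.trans (isConj_blockProd_of_isRotated hr)
  have hmin {l' : List (Block X)} (hl' : IsConj g (blockProd l')) : r.length < l'.length := by
    have := blockNumber_le hl'
    rwa [← hlen, hr.perm.length_eq, List.length_cons] at this
  have hone {p : List X} (hp : exponentSum (posProd p) = 0) (h : IsConj g (posProd p) ∨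
      IsConj g (posProd p)⁻¹) : False := by
    rw [eq_nil_of_exponentSum_posProd_eq_zero hp, posProd_nil, inv_one, or_self,
      isConj_one_left] at h
    exact hg h
  obtain ⟨p, q⟩ := x
  constructor <;> rintro (rfl : _ = [])
  · rcases List.eq_nil_or_concat' r with rfl | ⟨r, ⟨p', q'⟩, rfl⟩
    · have hq : IsConj g (posProd q)⁻¹ := by simpa using hl
      refine hone ?_ (.inr hq)
      rw [← neg_eq_zero, ← exponentSum_inv, ← exponentSum_eq_of_isConj hq, hg₀]
    · have := hmin (l' := r ++ [(p', q ++ q')]) (hl.trans (by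
        simpa [mul_assoc] using
          isConj_mul_comm (posProd q)⁻¹ (blockProd r * posProd p' * (posProd q')⁻¹)))
      simp at this
  · rcases r with _ | ⟨⟨p', q'⟩, r⟩
    · have hp : IsConj g (posProd p) := by simpa using hl
      exact hone ((exponentSum_eq_of_isConj hp).symm.trans hg₀) (.inl hp)
    · have := hmin (l' := (p ++ p', q') :: r) (by simpa [mul_assoc] using hl)
      simp at this

theorem isCyclicallyReducedBlocks_of_blockLength_minimal {g : FreeGroup X} {l : List (Block X)}
    (hl : IsConj g (blockProd l)) (hne : ∀ x ∈ l, x.1 ≠ [] ∧ x.2 ≠ [])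
    (hmin : ∀ l' : List (Block X), IsConj g (blockProd l') → l'.length = l.length →
      blockLength l ≤ blockLength l') : IsCyclicallyReducedBlocks l := by
  have hmin' {l₁ l₂ : List (Block X)} (h₁ : l ~r l₁) (hlen : l₂.length = l₁.length)
      (h : IsConj (blockProd l₁) (blockProd l₂)) : blockLength l₁ ≤ blockLength l₂ := by
    rw [← blockLength_eq_of_isRotated h₁]
    exact hmin l₂ ((hl.trans (isConj_blockProd_of_isRotated h₁)).trans h)
      (hlen.trans h₁.perm.length_eq.symm)
  refine ⟨fun x hx => (hne x hx).1, fun x hx => (hne x hx).2, fun ⟨p, q⟩ hx heq => ?_,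
    isChain_append_self (fun ⟨p, q⟩ ⟨p', q'⟩ r hr heq => ?_) fun ⟨p, q⟩ hx heq => ?_⟩
  · obtain ⟨r, hr⟩ := exists_isRotated_cons_of_mem hx
    obtain ⟨p, a, rfl⟩ := List.eq_nil_or_concat' p |>.resolve_left (hne _ hx).1
    obtain ⟨q, rfl⟩ := List.getLast?_eq_some_iff.1 (heq.symm.trans List.getLast?_concat)
    have hcancel : blockProd ((p ++ [a], q ++ [a]) :: r) = blockProd ((p, q) :: r) := by
      simp [mul_assoc]
    have := hmin' hr (l₂ := (p, q) :: r) rfl (hcancel ▸ .refl _)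
    simp only [blockLength_cons, List.length_append, List.length_singleton] at this
    lia
  · obtain ⟨a, q, rfl⟩ := List.exists_cons_of_ne_nil (hne (p, q) (hr.mem_iff.2 (by simp))).2
    obtain ⟨p', rfl⟩ := List.head?_eq_some_iff.1 heq.symm
    have hcancel : blockProd ((p, a :: q) :: (a :: p', q') :: r) =
        blockProd ((p, q) :: (p', q') :: r) := by
      simp [mul_assoc]
    have := hmin' hr (l₂ := (p, q) :: (p', q') :: r) rfl (hcancel ▸ .refl _)
    simp only [blockLength_cons, List.length_cons] at this
    lia
  · obtain ⟨a, q, rfl⟩ := List.exists_cons_of_ne_nil (hne (p, q) (by simp [hx])).2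
    obtain ⟨p, rfl⟩ := List.head?_eq_some_iff.1 heq.symm
    have := hmin' (.refl l) (l₂ := [(p, q)]) (by simp [hx]) (by
      simpa [hx, mul_assoc] using
        isConj_mul_comm (FreeGroup.of a) (posProd p * (posProd q)⁻¹ * (FreeGroup.of a)⁻¹))
    simp only [hx, blockLength_cons, List.length_cons] at this
    lia

theorem exists_isCyclicallyReducedBlocks [DecidableEq X] {g : FreeGroup X} (hg : g ≠ 1)
    (hg₀ : exponentSum g = 0) : ∃ l : List (Block X), IsConj g (blockProd l) ∧
      l.length = blockNumber g ∧ IsCyclicallyReducedBlocks l := by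
  obtain ⟨l, ⟨hl, hlen⟩, hmin⟩ := exists_minimalFor_of_wellFoundedLT
    (fun l : List (Block X) => IsConj g (blockProd l) ∧ l.length = blockNumber g) blockLength
    (exists_isConj_blockProd_length_eq_blockNumber g)
  refine ⟨l, hl, hlen, isCyclicallyReducedBlocks_of_blockLength_minimal hl
    (fun x hx => ne_nil_of_length_eq_blockNumber hg hg₀ hl hlen hx) fun l' hl' hlen' => ?_⟩
  exact (le_total _ _).elim id (hmin ⟨hl', hlen'.trans hlen⟩)

end Blocks

/-! ### The automorphism -/

section BonacciAut

variable {m : ℕ}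

/-- The image of a generator under `bonacciAut`: `(k + 1) 0` for the generator `k < m`, and `0`
for the last generator `m`. -/
def bonacciWord : Fin (m + 1) → List (Fin (m + 1)) :=
  Fin.lastCases [0] fun k => [k.succ, 0]

@[simp]
theorem bonacciWord_last : bonacciWord (Fin.last m) = [0] := by simp [bonacciWord]

@[simp]
theorem bonacciWord_castSucc (k : Fin m) : bonacciWord k.castSucc = [k.succ, 0] := by
  simp [bonacciWord]

/-- The automorphism of the free group on `a₀, …, aₘ` sending `aₖ` to `aₖ₊₁ a₀` for `k < m` and
`aₘ` to `a₀`. -/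
def bonacciAut (m : ℕ) : MulAut (FreeGroup (Fin (m + 1))) :=
  MonoidHom.toMulEquiv (FreeGroup.lift fun i => posProd (bonacciWord i))
    (FreeGroup.lift (Fin.cases (.of (Fin.last m)) fun k =>
      .of k.castSucc * (.of (Fin.last m))⁻¹))
    (FreeGroup.ext_hom _ _ fun i => by cases i using Fin.lastCases <;> simp)
    (FreeGroup.ext_hom _ _ fun i => by cases i using Fin.cases <;> simp)

theorem bonacciAut_posProd (p : List (Fin (m + 1))) :
    bonacciAut m (posProd p) = posProd (p.flatMap bonacciWord) :=
  lift_posProd bonacciWord p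

@[simp]
theorem bonacciAut_of (i : Fin (m + 1)) :
    bonacciAut m (FreeGroup.of i) = posProd (bonacciWord i) :=
  FreeGroup.lift_apply_of

theorem exponentSum_bonacciAut (w : FreeGroup (Fin (m + 1))) :
    exponentSum (bonacciAut m w) = bonacciMap ℤ m (exponentSum w) := by
  induction w using FreeGroup.induction_on with
  | C1 => simp
  | of i =>
    ext j
    cases i using Fin.lastCases <;> cases j using Fin.cases <;>
      simp [Pi.single_apply, Fin.castSucc_ne_last]
  | inv_of i ih => simp only [map_inv, exponentSum_inv, ih, map_neg]
  | mul v w hv hw => simp only [map_mul, exponentSum_mul, hv, hw, map_add]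

theorem exponentSum_bonacciAut_pow (k : ℕ) (w : FreeGroup (Fin (m + 1))) :
    exponentSum ((bonacciAut m ^ k) w) = (bonacciMap ℤ m ^ k) (exponentSum w) := by
  induction k with
  | zero => rfl
  | succ k ih =>
    rw [pow_succ', pow_succ', MulAut.mul_apply, exponentSum_bonacciAut, ih, Module.End.mul_apply]

theorem map_bonacciAut_pow_ne_map_conj (hm : m ≠ 0) {n : ℕ} (hn : 0 < n)
    {A : Subgroup (FreeGroup (Fin (m + 1)))} (hA : IsFreeFactor A) (hbot : A ≠ ⊥) (htop : A ≠ ⊤)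
    (u : FreeGroup (Fin (m + 1))) :
    A.map (bonacciAut m ^ n).toMonoidHom ≠ A.map (MulAut.conj u).toMonoidHom := by
  intro h
  obtain ⟨a, ha, ha₀⟩ := hA.exists_mem_exponentSum_ne_zero hbot
  obtain ⟨g, hg, hgA⟩ := hA.exists_dotProduct_exponentSum_eq_zero htop
  refine hg (eq_zero_of_forall_dotProduct_bonacciMap_pow hm hn ha₀ fun j => ?_)
  obtain ⟨b, hb, hab⟩ := exists_mem_isConj_pow_apply h ha j
  rw [← exponentSum_bonacciAut_pow, pow_mul, exponentSum_eq_of_isConj hab, hgA b hb]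

/-- The image of the positive word `p` under `bonacciAut`, with the final letter `0` which every
such image has removed. -/
def trimmedImage (p : List (Fin (m + 1))) : List (Fin (m + 1)) := (p.flatMap bonacciWord).dropLast

@[simp]
theorem trimmedImage_concat_last (p : List (Fin (m + 1))) :
    trimmedImage (p ++ [Fin.last m]) = p.flatMap bonacciWord := by
  simp [trimmedImage]

@[simp]
theorem trimmedImage_concat_castSucc (p : List (Fin (m + 1))) (k : Fin m) :
    trimmedImage (p ++ [k.castSucc]) = p.flatMap bonacciWord ++ [k.succ] := by
  simp [trimmedImage]

theorem trimmedImage_append_zero {p : List (Fin (m + 1))} (hp : p ≠ []) :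
    trimmedImage p ++ [0] = p.flatMap bonacciWord := by
  obtain ⟨p, a, rfl⟩ := (List.eq_nil_or_concat' p).resolve_left hp
  cases a using Fin.lastCases <;> simp

theorem getLast?_trimmedImage {p : List (Fin (m + 1))} (hp : trimmedImage p ≠ []) :
    (trimmedImage p).getLast? = p.getLast?.map (· + 1) := by
  rcases List.eq_nil_or_concat' p with rfl | ⟨p, a, rfl⟩
  · rfl
  cases a using Fin.lastCases with
  | last =>
    have hp' : p ≠ [] := by
      rintro rfl
      exact hp (trimmedImage_concat_last [])
    simp [← trimmedImage_append_zero hp']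
  | cast k => simp [Fin.coeSucc_eq_succ]

theorem head?_trimmedImage {p : List (Fin (m + 1))} (hp : trimmedImage p ≠ []) :
    (trimmedImage p).head? = p.head?.map (· + 1) := by
  rcases p with _ | ⟨a, p⟩
  · rfl
  rw [← List.head?_append_of_ne_nil _ hp (l₂ := [0]),
    trimmedImage_append_zero (List.cons_ne_nil a p)]
  cases a using Fin.lastCases <;> simp [Fin.coeSucc_eq_succ]

theorem exponentSum_posProd_trimmedImage {p : List (Fin (m + 1))} (hp : p ≠ []) :
    exponentSum (posProd (trimmedImage p)) =
      bonacciMap ℤ m (exponentSum (posProd p)) - Pi.single 0 1 := by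
  rw [← exponentSum_bonacciAut, bonacciAut_posProd, ← trimmedImage_append_zero hp]
  simp

theorem bonacciMap_one : bonacciMap ℤ m 1 = 1 + (m : ℤ) • Pi.single 0 1 := by
  ext i
  cases i using Fin.cases <;> simp [add_comm]

-- Up to scaling by `m`, this recentres the affine map `v ↦ T v - e₀` at its fixed point `m⁻¹ • 1`.
theorem bonacciMap_pow_smul_exponentSum_sub_one {p : List (Fin (m + 1))}
    (hp : ∀ k, trimmedImage^[k] p ≠ []) (k : ℕ) :
    (bonacciMap ℤ m ^ k) ((m : ℤ) • exponentSum (posProd p) - 1) =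
      (m : ℤ) • exponentSum (posProd (trimmedImage^[k] p)) - 1 := by
  induction k with
  | zero => rfl
  | succ k ih =>
    rw [pow_succ', Module.End.mul_apply, ih, map_sub, map_smul, bonacciMap_one,
      Function.iterate_succ_apply', exponentSum_posProd_trimmedImage (hp k), smul_sub]
    abel

theorem exists_lt_length_trimmedImage_iterate (hm : 2 ≤ m) {n : ℕ} (hn : 0 < n)
    {p : List (Fin (m + 1))} (hp : ∀ k, trimmedImage^[k] p ≠ []) (C : ℕ) :
    ∃ k, C < (trimmedImage^[n * k] p).length := by
  by_contra! hC
  have hbound (k : ℕ) :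
      ‖(bonacciMap ℤ m ^ (n * k)) ((m : ℤ) • exponentSum (posProd p) - 1)‖ ≤ (m * C + 1 : ℝ) := by
    rw [bonacciMap_pow_smul_exponentSum_sub_one hp]
    refine (norm_sub_le _ _).trans (add_le_add ?_ (by simp))
    refine (pi_norm_le_iff_of_nonneg (by positivity)).2 fun i => ?_
    rw [Pi.smul_apply, exponentSum_posProd, smul_eq_mul, ← Nat.cast_mul, Int.norm_natCast]
    exact_mod_cast Nat.mul_le_mul_left m (List.count_le_length.trans (hC k))
  have hzero := congrFun (eq_zero_of_norm_bonacciMap_pow_le (by lia) hn hbound) 0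
  have hdvd : (m : ℤ) ∣ 1 := ⟨exponentSum (posProd p) 0, (sub_eq_zero.1 hzero).symm⟩
  have := Int.le_of_dvd one_pos hdvd
  lia

/-- The effect of `bonacciAut` on a block: the removed final letters cancel. -/
def trimmedBlock : Block (Fin (m + 1)) → Block (Fin (m + 1)) := Prod.map trimmedImage trimmedImage

theorem bonacciAut_blockProd {l : List (Block (Fin (m + 1)))}
    (hl : ∀ x ∈ l, x.1 ≠ [] ∧ x.2 ≠ []) :
    bonacciAut m (blockProd l) = blockProd (l.map trimmedBlock) := by
  induction l with
  | nil => simp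
  | cons x l ih =>
    obtain ⟨hx, hl⟩ := List.forall_mem_cons.1 hl
    rw [List.map_cons, blockProd_cons, blockProd_cons, map_mul, map_mul, map_inv, ih hl,
      bonacciAut_posProd, bonacciAut_posProd, ← trimmedImage_append_zero hx.1,
      ← trimmedImage_append_zero hx.2]
    simp [trimmedBlock]

theorem IsCyclicallyReducedBlocks.map_trimmedBlock {l : List (Block (Fin (m + 1)))}
    (hl : IsCyclicallyReducedBlocks l)
    (hne : ∀ x ∈ l.map trimmedBlock, x.1 ≠ [] ∧ x.2 ≠ []) :
    IsCyclicallyReducedBlocks (l.map trimmedBlock) := by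
  have hinj : Function.Injective (Option.map (· + 1 : Fin (m + 1) → Fin (m + 1))) :=
    Option.map_injective (add_left_injective 1)
  have hne' := List.forall_mem_map.1 hne
  refine ⟨fun x hx => (hne x hx).1, fun x hx => (hne x hx).2, List.forall_mem_map.2 ?_, ?_⟩
  · intro x hx
    rw [trimmedBlock, Prod.map_fst, Prod.map_snd, getLast?_trimmedImage (hne' x hx).1,
      getLast?_trimmedImage (hne' x hx).2]
    exact hinj.ne (hl.getLast?_ne x hx)
  · rw [← List.map_append, List.isChain_map]
    refine hl.isChain.imp_of_mem_imp fun x y hx hy hxy => ?_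
    rw [List.mem_append, or_self] at hx hy
    rw [trimmedBlock, Prod.map_fst, Prod.map_snd, head?_trimmedImage (hne' x hx).2,
      head?_trimmedImage (hne' y hy).1]
    exact hinj.ne hxy

theorem isConj_bonacciAut_blockProd_map {g : FreeGroup (Fin (m + 1))}
    {l : List (Block (Fin (m + 1)))} (hl : ∀ x ∈ l, x.1 ≠ [] ∧ x.2 ≠ [])
    (h : IsConj g (blockProd l)) :
    IsConj (bonacciAut m g) (blockProd (l.map trimmedBlock)) := by
  rw [← bonacciAut_blockProd hl]
  exact (bonacciAut m).toMonoidHom.map_isConj h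

theorem blockNumber_bonacciAut_le {g : FreeGroup (Fin (m + 1))} (hg : g ≠ 1)
    (hg₀ : exponentSum g = 0) : blockNumber (bonacciAut m g) ≤ blockNumber g := by
  obtain ⟨l, hl, hlen⟩ := exists_isConj_blockProd_length_eq_blockNumber g
  have hne : ∀ x ∈ l, x.1 ≠ [] ∧ x.2 ≠ [] := fun x hx =>
    ne_nil_of_length_eq_blockNumber hg hg₀ hl hlen hx
  rw [← hlen, ← List.length_map trimmedBlock]
  exact blockNumber_le (isConj_bonacciAut_blockProd_map hne hl)

theorem bonacciAut_pow_ne_one {g : FreeGroup (Fin (m + 1))} (hg : g ≠ 1) (k : ℕ) :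
    (bonacciAut m ^ k) g ≠ 1 :=
  (map_ne_one_iff _ (bonacciAut m ^ k).injective).2 hg

theorem exponentSum_bonacciAut_pow_eq_zero {g : FreeGroup (Fin (m + 1))}
    (hg₀ : exponentSum g = 0) (k : ℕ) : exponentSum ((bonacciAut m ^ k) g) = 0 := by
  rw [exponentSum_bonacciAut_pow, hg₀, map_zero]

theorem blockNumber_bonacciAut_pow_of_isConj {n : ℕ} (hn : 0 < n) {g : FreeGroup (Fin (m + 1))}
    (hg : g ≠ 1) (hg₀ : exponentSum g = 0) (hconj : IsConj ((bonacciAut m ^ n) g) g) (k : ℕ) :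
    blockNumber ((bonacciAut m ^ k) g) = blockNumber g := by
  have hanti : Antitone fun k => blockNumber ((bonacciAut m ^ k) g) :=
    antitone_nat_of_succ_le fun k => by
      rw [pow_succ', MulAut.mul_apply]
      exact blockNumber_bonacciAut_le (bonacciAut_pow_ne_one hg k)
        (exponentSum_bonacciAut_pow_eq_zero hg₀ k)
  refine le_antisymm (hanti k.zero_le) ?_
  rw [← blockNumber_eq_of_isConj (isConj_pow_mul_apply hconj k)]
  exact hanti (Nat.le_mul_of_pos_left k hn)

theorem exists_isCyclicallyReducedBlocks_map_iterate {g : FreeGroup (Fin (m + 1))} (hg : g ≠ 1)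
    (hg₀ : exponentSum g = 0)
    (hconst : ∀ k, blockNumber ((bonacciAut m ^ k) g) = blockNumber g) :
    ∃ l : List (Block (Fin (m + 1))), ∀ k, IsCyclicallyReducedBlocks (l.map trimmedBlock^[k]) ∧
      IsConj ((bonacciAut m ^ k) g) (blockProd (l.map trimmedBlock^[k])) := by
  obtain ⟨l, hl, hlen, hred⟩ := exists_isCyclicallyReducedBlocks hg hg₀
  refine ⟨l, fun k => ?_⟩
  induction k with
  | zero => exact ⟨by simpa using hred, by simpa using hl⟩
  | succ k ih =>
    obtain ⟨hred, hl⟩ := ih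
    rw [Function.iterate_succ', ← List.map_map]
    have hl' := isConj_bonacciAut_blockProd_map
      (fun x hx => ⟨hred.fst_ne_nil x hx, hred.snd_ne_nil x hx⟩) hl
    rw [← MulAut.mul_apply, ← pow_succ'] at hl'
    refine ⟨hred.map_trimmedBlock fun x hx => ?_, hl'⟩
    exact ne_nil_of_length_eq_blockNumber (bonacciAut_pow_ne_one hg _)
      (exponentSum_bonacciAut_pow_eq_zero hg₀ _) hl' (by simp [hlen, hconst]) hx

theorem not_isConj_bonacciAut_pow (hm : 2 ≤ m) {n : ℕ} (hn : 0 < n)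
    {g : FreeGroup (Fin (m + 1))} (hg : g ≠ 1) : ¬ IsConj ((bonacciAut m ^ n) g) g := by
  intro hconj
  have hg₀ : exponentSum g = 0 := by
    refine eq_zero_of_bonacciMap_pow_eq_self (by lia) hn ?_
    rw [← exponentSum_bonacciAut_pow, exponentSum_eq_of_isConj hconj]
  obtain ⟨l, hl⟩ := exists_isCyclicallyReducedBlocks_map_iterate hg hg₀
    (blockNumber_bonacciAut_pow_of_isConj hn hg hg₀ hconj)
  have hl₀ : IsConj g (blockProd l) := by simpa using (hl 0).2
  obtain ⟨x, hx⟩ := List.exists_mem_of_ne_nil l (by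
    rintro rfl
    exact hg (by simpa using hl₀))
  have hmem (k : ℕ) : trimmedBlock^[k] x ∈ l.map trimmedBlock^[k] := List.mem_map_of_mem hx
  have hfst (k : ℕ) : (trimmedBlock^[k] x).1 = trimmedImage^[k] x.1 := by
    rw [trimmedBlock, Prod.map_iterate, Prod.map_fst]
  obtain ⟨k, hk⟩ := exists_lt_length_trimmedImage_iterate hm hn
    (fun k => hfst k ▸ (hl k).1.fst_ne_nil _ (hmem k)) (blockLength l)
  refine hk.not_ge ?_
  calc (trimmedImage^[n * k] x.1).length ≤ blockLength (l.map trimmedBlock^[n * k]) :=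
        hfst _ ▸ length_fst_le_blockLength (hmem _)
    _ = blockLength l := (hl _).1.blockLength_eq (by simpa using (hl 0).1)
        ((hl _).2.symm.trans ((isConj_pow_mul_apply hconj k).trans hl₀))

end BonacciAut

/-- For every rank `r ≥ 3` there is an automorphism of the free group of rank `r`
that is fully irreducible and atoroidal. -/
theorem exists_fully_irreducible_atoroidal (r : ℕ) (hr : 3 ≤ r) :
    ∃ φ : MulAut (FreeGroup (Fin r)),
      (∀ n : ℕ, 1 ≤ n → ∀ A : Subgroup (FreeGroup (Fin r)), IsFreeFactor A →
        A ≠ ⊥ → A ≠ ⊤ → ∀ u : FreeGroup (Fin r),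
          Subgroup.map (φ ^ n : MulAut (FreeGroup (Fin r))).toMonoidHom A ≠
            Subgroup.map (MulAut.conj u).toMonoidHom A) ∧
      (∀ n : ℕ, 1 ≤ n → ∀ w : FreeGroup (Fin r), w ≠ 1 →
        ¬ IsConj ((φ ^ n : MulAut (FreeGroup (Fin r))) w) w) := by
  obtain ⟨m, rfl⟩ : ∃ m, r = m + 1 := Nat.exists_eq_add_of_le' (by lia)
  have hm : 2 ≤ m := by lia
  exact ⟨bonacciAut m,
    fun n hn A hA hbot htop u => map_bonacciAut_pow_ne_map_conj (by lia) hn hA hbot htop u,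
    fun n hn w hw => not_isConj_bonacciAut_pow hm hn hw⟩
end
end

section
/- For the automorphism φ of F₃ determined by a ↦ w_a, b ↦ w_b, c ↦ w_c, and for every integer n ≥ 1 and every element u ∈ F₃ with u ≠ 1, the element φⁿ(u) is not conjugate to u. (The constructed fully irreducible is ageometric, hence nongeometric, hence atoroidal: no positive power preserves a nontrivial conjugacy class.) -/
noncomputable section

/-!
Call a word in `a, b, c` and their inverses legal if it is reduced and contains neither `a⁻¹ c` nor
`c⁻¹ a`, and an element of `F₃` legal if its reduced word is. The automorphism `φ` maps legal words
to legal words, without cancellation and at least doubling their length. Moreover, when one legal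
word begins with `a` and another with `c`, their images do not part at the illegal turn `{a, c}`; so
`φ` maps a product of two legal elements to a legal element. Writing `|x|` for the number of legal
factors needed for `x`, this means that `φ` halves `|·|`.

If `ψ = φⁿ` maps `u` to `g u g⁻¹`, then `|uᵐ|` and `|ψ(uᵐ)|` differ by a bounded amount, so the
numbers `|uᵐ|` are bounded. Hence for some `N` all powers of `v = ψᴺ(u)` are legal. As `ψ` doubles
the length of the legal element `vᵐ` and also conjugates it by `ψᴺ(g)`, this length is bounded
independently of `m`. So `v`, and with it its conjugate `u`, has finite order, that is, `u = 1`.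
-/

namespace Atoroidal

section FoldingSet

open scoped Pointwise

variable {G : Type*} [Group G] {ψ : Monoid.End G} {ℓ : G → ℕ} {S : Set G}

/-- A set `S` of elements of `G` such that `ψ` folds any product of two members of `S` into a single
member, and at least doubles the length `ℓ` of the members of `S`. -/
structure IsFoldingSet (ψ : Monoid.End G) (ℓ : G → ℕ) (S : Set G) : Prop where
  one_mem : 1 ∈ S
  mapsTo_mul : Set.MapsTo ψ (S * S) S
  two_mul_le : ∀ x ∈ S, 2 * ℓ x ≤ ℓ (ψ x)

namespace IsFoldingSet

theorem mapsTo (h : IsFoldingSet ψ ℓ S) : Set.MapsTo ψ S S :=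
  h.mapsTo_mul.mono_left (Set.subset_mul_left S h.one_mem)

protected theorem pow (h : IsFoldingSet ψ ℓ S) {n : ℕ} (hn : n ≠ 0) :
    IsFoldingSet (ψ ^ n) ℓ S := by
  obtain ⟨n, rfl⟩ := Nat.exists_eq_succ_of_ne_zero hn
  clear hn
  induction n with
  | zero => rwa [Nat.succ_eq_add_one, zero_add, pow_one]
  | succ n ih =>
    rw [Nat.succ_eq_add_one, pow_succ']
    refine ⟨h.one_mem, h.mapsTo.comp ih.mapsTo_mul, fun x hx => ?_⟩
    calc 2 * ℓ x ≤ ℓ ((ψ ^ (n + 1)) x) := ih.two_mul_le x hx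
      _ ≤ 2 * ℓ ((ψ ^ (n + 1)) x) := Nat.le_mul_of_pos_left _ two_pos
      _ ≤ ℓ (ψ ((ψ ^ (n + 1)) x)) := h.two_mul_le _ (ih.mapsTo hx)

theorem mapsTo_pow_two_mul (h : IsFoldingSet ψ ℓ S) (k : ℕ) :
    Set.MapsTo ψ (S ^ (2 * k)) (S ^ k) := by
  rw [pow_mul, sq, Set.mapsTo_iff_image_subset, Set.image_pow]
  exact Set.pow_subset_pow_left h.mapsTo_mul.image_subset

theorem mapsTo_pow_two_pow (h : IsFoldingSet ψ ℓ S) (k : ℕ) :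
    Set.MapsTo (ψ ^ k) (S ^ 2 ^ k) S := by
  induction k with
  | zero =>
    rw [pow_zero, pow_zero, pow_one]
    exact Set.mapsTo_id S
  | succ k ih =>
    rw [pow_succ ψ, pow_succ' 2]
    exact ih.comp (h.mapsTo_pow_two_mul (2 ^ k))

/-- Conjugation by `g` changes the word length with respect to `S` by a bounded amount, while `ψ`
halves it. -/
theorem exists_forall_mem_pow_of_map_eq_conj (h : IsFoldingSet ψ ℓ S)
    (hgen : ∀ x, ∃ k, x ∈ S ^ k) (g : G) :
    ∃ N, ∀ x, ψ x = g * x * g⁻¹ → x ∈ S ^ N := by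
  classical
  obtain ⟨i, hi⟩ := hgen g⁻¹
  obtain ⟨j, hj⟩ := hgen g
  refine ⟨2 * (i + j) + 1, fun x hx => ?_⟩
  set r := Nat.find (hgen x)
  have hr : x ∈ S ^ r := Nat.find_spec (hgen x)
  have hψx : ψ x ∈ S ^ ((r + 1) / 2) :=
    h.mapsTo_pow_two_mul _ (Set.pow_subset_pow_right h.one_mem (by omega) hr)
  have hx' : x = g⁻¹ * ψ x * g := by rw [hx]; group
  have hr_le : r ≤ i + (r + 1) / 2 + j := by
    refine Nat.find_min' (hgen x) ?_
    rw [pow_add, pow_add, hx']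
    exact Set.mul_mem_mul (Set.mul_mem_mul hi hψx) hj
  exact Set.pow_subset_pow_right h.one_mem (by omega) hr

theorem exists_forall_pow_apply_mem_of_map_eq_conj (h : IsFoldingSet ψ ℓ S)
    (hgen : ∀ x, ∃ k, x ∈ S ^ k) (g : G) :
    ∃ N : ℕ, ∀ x, ψ x = g * x * g⁻¹ → (ψ ^ N) x ∈ S := by
  obtain ⟨N, hN⟩ := h.exists_forall_mem_pow_of_map_eq_conj hgen g
  exact ⟨N, fun x hx => h.mapsTo_pow_two_pow N
    (Set.pow_subset_pow_right h.one_mem Nat.lt_two_pow_self.le (hN x hx))⟩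

theorem length_le_of_map_eq_conj (h : IsFoldingSet ψ ℓ S)
    (hℓ : ∀ x y, ℓ (x * y) ≤ ℓ x + ℓ y) {g x : G} (hxS : x ∈ S) (hx : ψ x = g * x * g⁻¹) :
    ℓ x ≤ ℓ g + ℓ g⁻¹ := by
  have hexp := h.two_mul_le x hxS
  rw [hx] at hexp
  have := hℓ (g * x) g⁻¹
  have := hℓ g x
  omega

theorem isOfFinOrder_of_isConj_map (h : IsFoldingSet ψ ℓ S) (hgen : ∀ x, ∃ k, x ∈ S ^ k)
    (hℓ : ∀ x y, ℓ (x * y) ≤ ℓ x + ℓ y) (hfin : ∀ N, {x | ℓ x ≤ N}.Finite) {u : G}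
    (hu : IsConj u (ψ u)) : IsOfFinOrder u := by
  obtain ⟨g, hg⟩ := isConj_iff.1 hu
  obtain ⟨N, hN⟩ := h.exists_forall_pow_apply_mem_of_map_eq_conj hgen g
  have hconj_pow (m : ℕ) : ψ (u ^ m) = g * u ^ m * g⁻¹ := by rw [map_pow, ← hg, conj_pow]
  have hψ_comm (x : G) : ψ ((ψ ^ N) x) = (ψ ^ N) (ψ x) :=
    DFunLike.congr_fun (Commute.self_pow ψ N).eq x
  have hbound (m : ℕ) : ℓ ((ψ ^ N) u ^ m) ≤ ℓ ((ψ ^ N) g) + ℓ ((ψ ^ N) g)⁻¹ := by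
    rw [← map_pow]
    refine h.length_le_of_map_eq_conj hℓ (hN _ (hconj_pow m)) ?_
    rw [hψ_comm, hconj_pow, map_mul, map_mul, map_inv]
  have hv : IsOfFinOrder ((ψ ^ N) u) := by
    rw [← finite_powers, Submonoid.coe_powers]
    exact (hfin _).subset (Set.range_subset_iff.2 hbound)
  have hconj (n : ℕ) : IsConj u ((ψ ^ n) u) := by
    induction n with
    | zero => rfl
    | succ n ih => rw [pow_succ']; exact hu.trans (MonoidHom.map_isConj ψ ih)
  exact (hconj N).symm.isOfFinOrder hv

end IsFoldingSet

end FoldingSet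

section LegalWord

open FreeGroup (mk invRev IsReduced mul_mk inv_mk)

variable {α : Type*} {T : SimpleGraph (α × Bool)} {P Q : List (α × Bool)}

/-- The inverse of a letter. -/
def bar (x : α × Bool) : α × Bool := (x.1, !x.2)

theorem bar_bar (x : α × Bool) : bar (bar x) = x := by simp only [bar, Bool.not_not]

/-- A word is legal for a graph `T` of legal turns if each of its two-letter subwords `x y` takes
a turn `{x⁻¹, y}` of `T`. As `T` has no loops, legal words are reduced. -/
def IsLegal (T : SimpleGraph (α × Bool)) (w : List (α × Bool)) : Prop :=
  w.IsChain fun x y => T.Adj (bar x) y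

instance [DecidableRel T.Adj] : DecidablePred (IsLegal T) :=
  fun w => inferInstanceAs (Decidable (w.IsChain _))

theorem IsLegal.invRev (h : IsLegal T P) : IsLegal T (invRev P) := by
  rw [FreeGroup.invRev, IsLegal, List.isChain_reverse, List.isChain_map]
  refine List.IsChain.imp (fun x y hxy => ?_) h
  change T.Adj (bar (bar y)) (bar x)
  rw [bar_bar]
  exact hxy.symm

theorem IsLegal.isReduced (h : IsLegal T P) : IsReduced P := by
  refine List.IsChain.imp (fun x y hxy hfst => ?_) h
  by_contra hsnd
  refine hxy.ne (Prod.ext hfst ?_)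
  simpa only [bar, Bool.not_eq] using hsnd

theorem IsLegal.norm_mk [DecidableEq α] (h : IsLegal T P) : (mk P).norm = P.length := by
  rw [FreeGroup.norm, FreeGroup.toWord_mk, h.isReduced.reduce_eq]

/-- The elements of the free group represented by legal words. -/
def legalElements (T : SimpleGraph (α × Bool)) : Set (FreeGroup α) :=
  mk '' {w | IsLegal T w}

theorem IsLegal.mk_mem (h : IsLegal T P) : mk P ∈ legalElements T := ⟨P, h, rfl⟩

theorem inv_mem_legalElements {g : FreeGroup α} (hg : g ∈ legalElements T) :
    g⁻¹ ∈ legalElements T := by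
  obtain ⟨w, hw, rfl⟩ := hg
  rw [inv_mk]
  exact hw.invRev.mk_mem

open scoped Pointwise in
theorem exists_mem_legalElements_pow (T : SimpleGraph (α × Bool)) (g : FreeGroup α) :
    ∃ k, g ∈ legalElements T ^ k := by
  have hletter (x : α × Bool) : mk [x] ∈ legalElements T ^ 1 := by
    rw [pow_one]
    exact IsLegal.mk_mem (List.isChain_singleton x)
  induction g using FreeGroup.induction_on with
  | C1 => exact ⟨0, by rw [pow_zero, Set.mem_one]⟩
  | of i => exact ⟨1, hletter (i, true)⟩
  | inv_of i => exact ⟨1, hletter (i, false)⟩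
  | mul g h hg hh =>
    obtain ⟨k, hk⟩ := hg
    obtain ⟨l, hl⟩ := hh
    exact ⟨k + l, by rw [pow_add]; exact Set.mul_mem_mul hk hl⟩

theorem inv_mk_cons_mul_mk_cons (x : α × Bool) (P Q : List (α × Bool)) :
    (mk (x :: P))⁻¹ * mk (x :: Q) = (mk P)⁻¹ * mk Q := by
  have hsplit (w : List (α × Bool)) : mk (x :: w) = mk [x] * mk w := (mul_mk (L₁ := [x])).symm
  rw [hsplit P, hsplit Q, mul_inv_rev, mul_assoc, inv_mul_cancel_left]

/-- Two words diverge legally if, after their longest common prefix, they continue with letters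
that form a legal turn; in particular neither is a prefix of the other. -/
inductive Diverges (T : SimpleGraph (α × Bool)) : List (α × Bool) → List (α × Bool) → Prop
  | adj {x y P Q} (h : T.Adj x y) : Diverges T (x :: P) (y :: Q)
  | cons {x P Q} (h : Diverges T P Q) : Diverges T (x :: P) (x :: Q)

namespace Diverges

theorem cons_cons_iff {x y : α × Bool} :
    Diverges T (x :: P) (y :: Q) ↔ T.Adj x y ∨ x = y ∧ Diverges T P Q := by
  constructor
  · rintro (h | h)
    exacts [.inl h, .inr ⟨rfl, h⟩]
  · rintro (h | ⟨rfl, h⟩)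
    exacts [.adj h, .cons h]

instance decidable [DecidableEq α] [DecidableRel T.Adj] : ∀ P Q, Decidable (Diverges T P Q)
  | [], _ => .isFalse nofun
  | _ :: _, [] => .isFalse nofun
  | _ :: P, _ :: Q =>
    have := decidable P Q
    decidable_of_iff' _ cons_cons_iff

theorem symm (h : Diverges T P Q) : Diverges T Q P := by
  induction h with
  | adj h => exact .adj h.symm
  | cons _ ih => exact .cons ih

theorem append (h : Diverges T P Q) (P' Q' : List (α × Bool)) :
    Diverges T (P ++ P') (Q ++ Q') := by
  induction h with
  | adj h => exact .adj h
  | cons _ ih => exact .cons ih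

theorem inv_mk_mul_mk_mem (h : Diverges T P Q) (hP : IsLegal T P) (hQ : IsLegal T Q) :
    (mk P)⁻¹ * mk Q ∈ legalElements T := by
  induction h with
  | @adj x y P Q h =>
    rw [inv_mk, mul_mk]
    refine IsLegal.mk_mem (List.isChain_append.2 ⟨hP.invRev, hQ, ?_⟩)
    have hlast : (invRev (x :: P)).getLast? = some (bar x) := by
      rw [FreeGroup.invRev_cons, List.getLast?_append]
      rfl
    rintro _ hp _ ⟨⟩
    obtain rfl := Option.some.inj (hlast.symm.trans hp)
    rwa [bar_bar]
  | @cons x P Q _ ih =>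
    rw [inv_mk_cons_mul_mk_cons]
    exact ih hP.tail hQ.tail

end Diverges

/-- Two words meet legally if one is a prefix of the other or they diverge legally. Equivalently,
no illegal turn remains in `P⁻¹ Q` at the point where cancellation stops. -/
def MeetsLegally (T : SimpleGraph (α × Bool)) (P Q : List (α × Bool)) : Prop :=
  P <+: Q ∨ Q <+: P ∨ Diverges T P Q

theorem MeetsLegally.symm (h : MeetsLegally T P Q) : MeetsLegally T Q P := by
  rcases h with h | h | h
  exacts [.inr (.inl h), .inl h, .inr (.inr h.symm)]

theorem IsLegal.inv_mk_mul_mk_mem (hQ : IsLegal T Q) (h : P <+: Q) :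
    (mk P)⁻¹ * mk Q ∈ legalElements T := by
  obtain ⟨R, rfl⟩ := h
  rw [← mul_mk, inv_mul_cancel_left]
  exact IsLegal.mk_mem (List.isChain_append.1 hQ).2.1

theorem MeetsLegally.inv_mk_mul_mk_mem (h : MeetsLegally T P Q) (hP : IsLegal T P)
    (hQ : IsLegal T Q) : (mk P)⁻¹ * mk Q ∈ legalElements T := by
  rcases h with h | h | h
  · exact hQ.inv_mk_mul_mk_mem h
  · have := inv_mem_legalElements (hP.inv_mk_mul_mk_mem h)
    rwa [mul_inv_rev, inv_inv] at this
  · exact h.inv_mk_mul_mk_mem hP hQ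

end LegalWord

section TrainTrack

open FreeGroup (mk invRev mul_mk)

variable {α : Type*} [DecidableEq α] {T : SimpleGraph (α × Bool)} {φ : Monoid.End (FreeGroup α)}

/-- The reduced word representing the image of a letter. -/
def letterImage (φ : Monoid.End (FreeGroup α)) (x : α × Bool) : List (α × Bool) :=
  (φ (mk [x])).toWord

/-- The concatenation of the images of the letters of a word, without cancellation. -/
def wordImage (φ : Monoid.End (FreeGroup α)) (w : List (α × Bool)) : List (α × Bool) :=
  w.flatMap (letterImage φ)

theorem letterImage_bar (φ : Monoid.End (FreeGroup α)) (x : α × Bool) :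
    letterImage φ (bar x) = invRev (letterImage φ x) := by
  have : mk [bar x] = (mk [x])⁻¹ := rfl
  rw [letterImage, this, map_inv, FreeGroup.toWord_inv, letterImage]

theorem wordImage_append (φ : Monoid.End (FreeGroup α)) (P Q : List (α × Bool)) :
    wordImage φ (P ++ Q) = wordImage φ P ++ wordImage φ Q :=
  List.flatMap_append

theorem map_mk (φ : Monoid.End (FreeGroup α)) (w : List (α × Bool)) :
    φ (mk w) = mk (wordImage φ w) := by
  induction w with
  | nil => exact map_one φ
  | cons x w ih =>
    calc φ (mk (x :: w)) = φ (mk [x] * mk w) := by rw [mul_mk, List.singleton_append]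
      _ = mk (letterImage φ x) * mk (wordImage φ w) := by
        rw [map_mul, ih, letterImage, FreeGroup.mk_toWord]
      _ = mk (wordImage φ (x :: w)) := by rw [mul_mk, wordImage, wordImage, List.flatMap_cons]

/-- The endomorphism `φ`, as a self-map of the rose with petals `α`, is a train track map with
legal turns `T` that stretches every edge at least twofold. -/
structure IsTrainTrack (T : SimpleGraph (α × Bool)) (φ : Monoid.End (FreeGroup α)) : Prop where
  isLegal_letterImage : ∀ x, IsLegal T (letterImage φ x)
  adj_head : ∀ x y, T.Adj x y →
    ∀ p ∈ (letterImage φ x).head?, ∀ q ∈ (letterImage φ y).head?, T.Adj p q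
  two_le_length : ∀ x, 2 ≤ (letterImage φ x).length

/-- Two legal words that form an illegal turn have images that meet legally: the illegal turn
disappears under a single application of `φ`. -/
def ResolvesIllegalTurns (T : SimpleGraph (α × Bool)) (φ : Monoid.End (FreeGroup α)) : Prop :=
  ∀ ⦃x y⦄, x ≠ y → ¬ T.Adj x y → ∀ ⦃P Q⦄, IsLegal T (x :: P) → IsLegal T (y :: Q) →
    MeetsLegally T (wordImage φ (x :: P)) (wordImage φ (y :: Q))

namespace IsTrainTrack

theorem letterImage_ne_nil (h : IsTrainTrack T φ) (x : α × Bool) : letterImage φ x ≠ [] :=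
  List.ne_nil_of_length_pos (two_pos.trans_le (h.two_le_length x))

theorem isLegal_wordImage (h : IsTrainTrack T φ) {w : List (α × Bool)} (hw : IsLegal T w) :
    IsLegal T (wordImage φ w) := by
  have hnil : [] ∉ w.map (letterImage φ) := by
    simpa only [List.mem_map, not_exists, not_and] using fun x _ => h.letterImage_ne_nil x
  rw [wordImage, List.flatMap_def, IsLegal, List.isChain_flatten hnil, List.isChain_map]
  refine ⟨List.forall_mem_map.2 fun x _ => h.isLegal_letterImage x,
    List.IsChain.imp (fun x y hxy p hp q hq => h.adj_head (bar x) y hxy (bar p) ?_ q hq) hw⟩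
  rw [letterImage_bar, invRev, List.head?_reverse, List.getLast?_map]
  exact Option.mem_map_of_mem bar hp

theorem two_mul_length_le (h : IsTrainTrack T φ) (w : List (α × Bool)) :
    2 * w.length ≤ (wordImage φ w).length := by
  induction w with
  | nil => exact le_rfl
  | cons x w ih =>
    have := h.two_le_length x
    simp only [wordImage, List.flatMap_cons, List.length_append, List.length_cons] at ih ⊢
    omega

theorem two_mul_norm_le (h : IsTrainTrack T φ) {g : FreeGroup α} (hg : g ∈ legalElements T) :
    2 * g.norm ≤ (φ g).norm := by
  obtain ⟨w, hw, rfl⟩ := hg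
  rw [map_mk, hw.norm_mk, (h.isLegal_wordImage hw).norm_mk]
  exact h.two_mul_length_le w

theorem diverges_wordImage (h : IsTrainTrack T φ) {x y : α × Bool} (hxy : T.Adj x y)
    (P Q : List (α × Bool)) : Diverges T (wordImage φ (x :: P)) (wordImage φ (y :: Q)) := by
  obtain ⟨p, P', hp⟩ := List.exists_cons_of_ne_nil (h.letterImage_ne_nil x)
  obtain ⟨q, Q', hq⟩ := List.exists_cons_of_ne_nil (h.letterImage_ne_nil y)
  rw [wordImage, wordImage, List.flatMap_cons, List.flatMap_cons, hp, hq]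
  exact .adj (h.adj_head x y hxy p (by rw [hp]; rfl) q (by rw [hq]; rfl))

theorem map_inv_mk_mul_mk_mem (h : IsTrainTrack T φ) (hT : ResolvesIllegalTurns T φ) :
    ∀ P Q, IsLegal T P → IsLegal T Q → φ ((FreeGroup.mk P)⁻¹ * FreeGroup.mk Q) ∈ legalElements T
  | [], Q, _, hQ => by
    rw [← FreeGroup.one_eq_mk, inv_one, one_mul, map_mk]
    exact (h.isLegal_wordImage hQ).mk_mem
  | x :: P, [], hP, _ => by
    rw [← FreeGroup.one_eq_mk, mul_one, map_inv, map_mk]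
    exact inv_mem_legalElements (h.isLegal_wordImage hP).mk_mem
  | x :: P, y :: Q, hP, hQ => by
    by_cases hxy : x = y
    · subst hxy
      rw [inv_mk_cons_mul_mk_cons]
      exact map_inv_mk_mul_mk_mem h hT P Q hP.tail hQ.tail
    · have hmeet : MeetsLegally T (wordImage φ (x :: P)) (wordImage φ (y :: Q)) := by
        by_cases hadj : T.Adj x y
        · exact .inr (.inr (h.diverges_wordImage hadj P Q))
        · exact hT hxy hadj hP hQ
      rw [map_mul, map_inv, map_mk, map_mk]
      exact hmeet.inv_mk_mul_mk_mem (h.isLegal_wordImage hP) (h.isLegal_wordImage hQ)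

theorem isFoldingSet (h : IsTrainTrack T φ) (hT : ResolvesIllegalTurns T φ) :
    IsFoldingSet φ FreeGroup.norm (legalElements T) where
  one_mem := IsLegal.mk_mem List.isChain_nil
  mapsTo_mul := by
    rintro _ ⟨g, hg, _, ⟨Q, hQ, rfl⟩, rfl⟩
    obtain ⟨P, hP, hPg⟩ := inv_mem_legalElements hg
    have := h.map_inv_mk_mul_mk_mem hT P Q hP hQ
    rwa [hPg, inv_inv] at this
  two_mul_le _ := h.two_mul_norm_le

end IsTrainTrack

theorem finite_norm_le [Finite α] (N : ℕ) : {g : FreeGroup α | g.norm ≤ N}.Finite :=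
  (List.finite_length_le (α × Bool) N).preimage FreeGroup.toWord_injective.injOn

theorem IsTrainTrack.not_isConj_pow_apply [Finite α] (h : IsTrainTrack T φ)
    (hT : ResolvesIllegalTurns T φ) {n : ℕ} (hn : n ≠ 0) {u : FreeGroup α} (hu : u ≠ 1) :
    ¬ IsConj ((φ ^ n) u) u := fun hconj =>
  not_isOfFinOrder_of_isMulTorsionFree hu <|
    ((h.isFoldingSet hT).pow hn).isOfFinOrder_of_isConj_map (exists_mem_legalElements_pow T)
      FreeGroup.norm_mul_le finite_norm_le hconj.symm

theorem MeetsLegally.of_prefix_wordImage {P Q : List (α × Bool)}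
    (h : wordImage φ P <+: wordImage φ Q) (R : List (α × Bool)) :
    MeetsLegally T (wordImage φ P) (wordImage φ (Q ++ R)) := by
  rw [wordImage_append]
  exact .inl (h.trans (List.prefix_append _ _))

theorem MeetsLegally.of_diverges_wordImage {P Q : List (α × Bool)}
    (h : Diverges T (wordImage φ P) (wordImage φ Q)) (P' Q' : List (α × Bool)) :
    MeetsLegally T (wordImage φ (P ++ P')) (wordImage φ (Q ++ Q')) := by
  rw [wordImage_append, wordImage_append]
  exact .inr (.inr (h.append _ _))

end TrainTrack

section Rank3

/-- The letter `a`. -/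
abbrev A : Fin 3 × Bool := (0, true)
/-- The letter `b`. -/
abbrev B : Fin 3 × Bool := (1, true)
/-- The letter `c`. -/
abbrev C : Fin 3 × Bool := (2, true)

/-- The endomorphism `a ↦ w_a`, `b ↦ w_b`, `c ↦ w_c` of `F₃`. -/
def phi : Monoid.End F3 := FreeGroup.lift ![wa, wb, wc]

/-- The legal turns of `phi`: all turns except `{a, c}`. -/
def legalTurns : SimpleGraph (Fin 3 × Bool) := .fromEdgeSet {s(A, C)}ᶜ

instance : DecidableRel legalTurns.Adj :=
  inferInstanceAs (DecidableRel (SimpleGraph.fromEdgeSet _).Adj)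

theorem isTrainTrack_phi : IsTrainTrack legalTurns phi where
  isLegal_letterImage := by decide
  adj_head := by decide
  two_le_length := by decide

theorem meetsLegally_ac_cb {P Q : List (Fin 3 × Bool)}
    (hP : IsLegal legalTurns (bar C :: P)) (hQ : IsLegal legalTurns (bar B :: Q)) :
    MeetsLegally legalTurns
      (wordImage phi (A :: bar C :: P)) (wordImage phi (C :: bar B :: Q)) := by
  have leave_ac : ∀ x, legalTurns.Adj (bar (bar C)) x → x ≠ bar B →
      Diverges legalTurns (wordImage phi [A, bar C, x]) (wordImage phi [C, bar B]) := by
    decide +kernel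
  have leave_cb : ∀ y, legalTurns.Adj (bar (bar B)) y → y ≠ C →
      Diverges legalTurns (wordImage phi [A, bar C, bar B]) (wordImage phi [C, bar B, y]) := by
    decide +kernel
  have leave_cbc : ∀ y, legalTurns.Adj (bar C) y →
      Diverges legalTurns (wordImage phi [A, bar C, bar B]) (wordImage phi [C, bar B, C, y]) := by
    decide +kernel
  rcases P with _ | ⟨x, P⟩
  · exact .of_prefix_wordImage (P := [A, bar C]) (Q := [C, bar B]) (by decide) Q
  have hx := (List.isChain_cons_cons.1 hP).1
  obtain rfl | hxB := eq_or_ne x (bar B)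
  swap; · exact .of_diverges_wordImage (leave_ac x hx hxB) P Q
  rcases Q with _ | ⟨y, Q⟩
  · exact (MeetsLegally.of_prefix_wordImage (P := [C, bar B]) (Q := [A, bar C, bar B])
      (by decide) P).symm
  obtain ⟨hy, hQ⟩ := List.isChain_cons_cons.1 hQ
  obtain rfl | hyC := eq_or_ne y C
  swap; · exact .of_diverges_wordImage (leave_cb y hy hyC) P Q
  rcases Q with _ | ⟨z, Q⟩
  · exact (MeetsLegally.of_prefix_wordImage (P := [C, bar B, C]) (Q := [A, bar C, bar B])
      (by decide) P).symm
  · exact .of_diverges_wordImage (leave_cbc z (List.isChain_cons_cons.1 hQ).1) P Q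

/- With `w = w_c` one has `w_a = w b⁻¹ w b w² b⁻¹ a` and `w_b = b w a⁻¹ b w⁻² b⁻¹ w⁻¹ b`, so that
`φ(c)`, `φ(a)`, `φ(a c⁻¹)`, `φ(c b⁻¹) = φ(a c⁻¹) b⁻¹`, `φ(c b⁻¹ c)`, `φ(a c⁻¹ b⁻¹)` form
a chain of prefixes. Hence the cancellation can only continue along `a c⁻¹ b⁻¹` and `c b⁻¹ c`. -/
theorem meetsLegally_a_c {P Q : List (Fin 3 × Bool)}
    (hP : IsLegal legalTurns (A :: P)) (hQ : IsLegal legalTurns (C :: Q)) :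
    MeetsLegally legalTurns (wordImage phi (A :: P)) (wordImage phi (C :: Q)) := by
  have leave_c : ∀ y, legalTurns.Adj (bar C) y → y ≠ bar B →
      Diverges legalTurns (wordImage phi [A]) (wordImage phi [C, y]) := by decide
  have leave_a : ∀ x, legalTurns.Adj (bar A) x → x ≠ bar C →
      Diverges legalTurns (wordImage phi [A, x]) (wordImage phi [C, bar B]) := by decide +kernel
  rcases Q with _ | ⟨y, Q⟩
  · exact (MeetsLegally.of_prefix_wordImage (P := [C]) (Q := [A]) (by decide) P).symm
  obtain ⟨hy, hQ⟩ := List.isChain_cons_cons.1 hQ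
  obtain rfl | hyB := eq_or_ne y (bar B)
  swap; · exact .of_diverges_wordImage (leave_c y hy hyB) P Q
  rcases P with _ | ⟨x, P⟩
  · exact .of_prefix_wordImage (P := [A]) (Q := [C, bar B]) (by decide) Q
  obtain ⟨hx, hP⟩ := List.isChain_cons_cons.1 hP
  obtain rfl | hxC := eq_or_ne x (bar C)
  · exact meetsLegally_ac_cb hP hQ
  · exact .of_diverges_wordImage (leave_a x hx hxC) P Q

theorem resolvesIllegalTurns_phi : ResolvesIllegalTurns legalTurns phi := by
  have hillegal : ∀ x y, x ≠ y → ¬ legalTurns.Adj x y → x = A ∧ y = C ∨ x = C ∧ y = A := by decide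
  intro x y hne hxy P Q hP hQ
  obtain ⟨rfl, rfl⟩ | ⟨rfl, rfl⟩ := hillegal x y hne hxy
  · exact meetsLegally_a_c hP hQ
  · exact (meetsLegally_a_c hQ hP).symm

theorem coe_pow_eq_phi_pow {φ : MulAut F3} (ha : φ a = wa) (hb : φ b = wb) (hc : φ c = wc)
    (n : ℕ) : ⇑(φ ^ n) = ⇑(phi ^ n) := by
  have hφ : φ.toMonoidHom = phi := by
    ext i
    fin_cases i
    exacts [ha, hb, hc]
  have hφ' : ⇑φ = phi := congrArg DFunLike.coe hφ
  rw [Monoid.End.coe_pow, ← hφ']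
  exact hom_coe_pow _ rfl (fun _ _ => rfl) φ n

end Rank3

end Atoroidal

/-- The automorphism `φ` of `F₃` with `a ↦ w_a`, `b ↦ w_b`, `c ↦ w_c` is atoroidal:
no positive power of `φ` maps a nontrivial element to a conjugate of itself. -/
theorem atoroidal_rank3 (φ : MulAut F3)
    (ha : φ a = wa) (hb : φ b = wb) (hc : φ c = wc) :
    ∀ n : ℕ, 1 ≤ n → ∀ u : F3, u ≠ 1 → ¬ IsConj ((φ ^ n : MulAut F3) u) u := by
  intro n hn u hu
  rw [Atoroidal.coe_pow_eq_phi_pow ha hb hc]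
  exact Atoroidal.isTrainTrack_phi.not_isConj_pow_apply
    Atoroidal.resolvesIllegalTurns_phi (Nat.one_le_iff_ne_zero.1 hn) hu
end
end
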